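/- arXiv:1403.1441 — 3 statements merged into one kernel-verified Lean document; each statement's English description precedes it below -/
import Mathlib

section
/- Let X = (X_1, X_2, …) be a sequence of ℝ^d-valued random vectors with partial sums S_n := X_1 + … + X_n, let A_n be d×d real matrices and b_n ∈ ℝ^d, and assume: (ii) the triangular array (A_n X_j : 1 ≤ j ≤ n, n ≥ 1) is infinitesimal; (iii) the distributions of A_n S_n + b_n converge weakly to a full probability measure μ on ℝ^d. Then A_n → 0 (the zero matrix) as n → ∞, and A_n is invertible for all sufficiently large n. -/
open MeasureTheory Filter Topology Matrix

/-- Convolution of two Borel measures on `ℝ^d`. -/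
noncomputable def mconv {d : ℕ} (μ ν : Measure (Fin d → ℝ)) : Measure (Fin d → ℝ) :=
  (μ.prod ν).map (fun p => p.1 + p.2)

/-- The Urbanik decomposability semigroup `D(μ)`: all matrices `A` such that
`μ = (A_*μ) ∗ ν` for some probability measure `ν`. -/
def UrbanikD {d : ℕ} (μ : Measure (Fin d → ℝ)) : Set (Matrix (Fin d) (Fin d) ℝ) :=
  {A | ∃ ν : Measure (Fin d → ℝ), IsProbabilityMeasure ν ∧ μ = mconv (μ.map A.mulVec) ν}

/-- A measure on `ℝ^d` is full if its support is not contained in any hyperplane,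
i.e. no translate `v + L` of a proper linear subspace `L` carries all of its mass. -/
def IsFull {d : ℕ} (μ : Measure (Fin d → ℝ)) : Prop :=
  ∀ (v : Fin d → ℝ) (L : Submodule ℝ (Fin d → ℝ)), L ≠ ⊤ → μ {x | x - v ∈ L} < 1

/-- Weak convergence of a sequence of measures on `ℝ^d`. -/
def WeakLim {d : ℕ} (μs : ℕ → Measure (Fin d → ℝ)) (μ : Measure (Fin d → ℝ)) : Prop :=
  ∀ f : BoundedContinuousFunction (Fin d → ℝ) ℝ,
    Tendsto (fun n => ∫ x, f x ∂(μs n)) atTop (𝓝 (∫ x, f x ∂μ))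

/-- Partial sums `S_n = X_1 + ... + X_n`. -/
def partialSum {Ω : Type*} {d : ℕ} (X : ℕ → Ω → (Fin d → ℝ)) (n : ℕ) (ω : Ω) :
    Fin d → ℝ :=
  ∑ j ∈ Finset.Icc 1 n, X j ω

/-- The triangular array `(A_n X_j : 1 ≤ j ≤ n, n ≥ 1)` is infinitesimal:
`sup_{1 ≤ j ≤ n} P(‖A_n X_j‖ ≥ ε) → 0` as `n → ∞`, for every `ε > 0`. -/
def Infinitesimal {Ω : Type*} [MeasurableSpace Ω] {d : ℕ} (P : Measure Ω)
    (A : ℕ → Matrix (Fin d) (Fin d) ℝ) (X : ℕ → Ω → (Fin d → ℝ)) : Prop :=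
  ∀ ε > (0 : ℝ), ∀ δ > (0 : ℝ), ∃ N : ℕ, ∀ n ≥ N, ∀ j : ℕ, 1 ≤ j → j ≤ n →
    (P {ω | ε ≤ ‖(A n).mulVec (X j ω)‖}).toReal < δ

/-!
A law on a finite-dimensional space is degenerate when some nonzero linear functional is almost
surely constant under it. Functionals can be normalized to lie on the compact unit sphere, so the
degenerate laws form a weakly closed set; since the limit law is not degenerate, neither are the
laws of `A n (S n) + b n` for large `n`. A singular `A n` would make such a law degenerate, by
confining it to a translate of the range of `A n`. If `A n` did not tend to zero, a limit point `B`
of the normalized operators `‖A n‖⁻¹ • A n` would be a nonzero operator vanishing almost surely on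
every `X j`; then `S n` would lie in the proper subspace `ker B`, and `A n (S n) + b n` in a
translate of its image under `A n`, again proper by counting dimensions.
-/

section WeakTopology

variable {T E Y : Type*} [TopologicalSpace T] [TopologicalSpace E] [MeasurableSpace E]
  [OpensMeasurableSpace E] [HasOuterApproxClosed E] [TopologicalSpace Y]

lemma isOpen_setOf_measure_pos {U : Set E} (hU : IsOpen U) :
    IsOpen {μ : ProbabilityMeasure E | 0 < (μ : Measure E) U} :=
  isOpen_iff_mem_nhds.2 fun _ hμ =>
    eventually_lt_of_lt_liminf
      (hμ.trans_le (ProbabilityMeasure.le_liminf_measure_open_of_tendsto tendsto_id hU))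

lemma eventually_frequently_ae_mem {F : T → E → Y} (hF : Continuous (Function.uncurry F)) {t : T}
    {μ : ProbabilityMeasure E} {x : E} (hx : x ∈ (μ : Measure E).support) {W : Set Y}
    (hW : W ∈ 𝓝 (F t x)) :
    ∀ᶠ p : T × ProbabilityMeasure E in 𝓝 (t, μ), ∃ᶠ y in ae (p.2 : Measure E), F p.1 y ∈ W := by
  obtain ⟨V, hV, U, hU, hVU⟩ :=
    mem_nhds_prod_iff.1 (hF.continuousAt.preimage_mem_nhds (x := (t, x)) hW)
  obtain ⟨U', hU'U, hU', hxU'⟩ := mem_nhds_iff.1 hU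
  have hμU' : 0 < (μ : Measure E) U' :=
    (Measure.mem_support_iff_forall x).1 hx U' (hU'.mem_nhds hxU')
  filter_upwards [prod_mem_nhds hV ((isOpen_setOf_measure_pos hU').mem_nhds hμU')] with p hp
  refine (frequently_ae_mem_iff.2 (ne_of_gt hp.2)).mono fun y hy => ?_
  exact hVU (Set.mk_mem_prod hp.1 (hU'U hy))

lemma isClosed_setOf_eventuallyConst_ae [HereditarilyLindelofSpace E] [T2Space Y] {F : T → E → Y}
    (hF : Continuous (Function.uncurry F)) :
    IsClosed {p : T × ProbabilityMeasure E | EventuallyConst (F p.1) (ae (p.2 : Measure E))} := by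
  refine isOpen_compl_iff.1 (isOpen_iff_mem_nhds.2 ?_)
  rintro ⟨t, μ⟩ hconst
  obtain ⟨_, ⟨x, hx, rfl⟩, _, ⟨y, hy, rfl⟩, hxy⟩ : (F t '' (μ : Measure E).support).Nontrivial := by
    rw [← Set.not_subsingleton_iff]
    exact fun h => hconst ⟨_, image_mem_map Measure.support_mem_ae, h⟩
  obtain ⟨V, W, hV, hW, hVW⟩ := t2_separation_nhds hxy
  filter_upwards [eventually_frequently_ae_mem hF hx hV, eventually_frequently_ae_mem hF hy hW]
    with p hpV hpW
  rintro ⟨s, hs, hs_subsingleton⟩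
  obtain ⟨u, huV, hus⟩ := (hpV.and_eventually hs).exists
  obtain ⟨v, hvW, hvs⟩ := (hpW.and_eventually hs).exists
  exact hVW.ne_of_mem huV hvW (hs_subsingleton hus hvs)

end WeakTopology

section Degenerate

variable {E : Type*} [NormedAddCommGroup E] [NormedSpace ℝ E] [MeasurableSpace E]

/-- A measure is degenerate if some nonzero continuous linear functional is almost everywhere
constant. For probability measures on a finite-dimensional space, this says that the measure is
carried by a hyperplane. -/
def IsDegenerate (μ : Measure E) : Prop :=
  ∃ f : StrongDual ℝ E, f ≠ 0 ∧ EventuallyConst f (ae μ)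

lemma IsDegenerate.exists_norm_eq_one {μ : Measure E} (h : IsDegenerate μ) :
    ∃ f : StrongDual ℝ E, ‖f‖ = 1 ∧ EventuallyConst f (ae μ) := by
  obtain ⟨f, hf, hconst⟩ := h
  exact ⟨‖f‖⁻¹ • f, norm_smul_inv_norm hf, hconst.comp (‖f‖⁻¹ • ·)⟩

variable [OpensMeasurableSpace E] [FiniteDimensional ℝ E]

lemma isClosed_setOf_isDegenerate :
    IsClosed {μ : ProbabilityMeasure E | IsDegenerate (μ : Measure E)} := by
  let S := Metric.sphere (0 : StrongDual ℝ E) 1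
  have : CompactSpace S := isCompact_iff_compactSpace.1 (isCompact_sphere _ _)
  have hclosed : IsClosed
      {p : S × ProbabilityMeasure E | EventuallyConst (p.1 : E → ℝ) (ae (p.2 : Measure E))} :=
    isClosed_setOf_eventuallyConst_ae (F := fun (f : S) x => (f : StrongDual ℝ E) x) (by fun_prop)
  convert isClosedMap_snd_of_compactSpace _ hclosed
  ext μ
  constructor
  · intro h
    obtain ⟨f, hf, hconst⟩ := h.exists_norm_eq_one
    exact ⟨(⟨f, mem_sphere_zero_iff_norm.2 hf⟩, μ), hconst, rfl⟩
  · rintro ⟨⟨f, μ⟩, hconst, rfl⟩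
    exact ⟨f, ne_zero_of_mem_unit_sphere f, hconst⟩

variable {Ω Ω' : Type*} [MeasurableSpace Ω] [MeasurableSpace Ω'] {P : Measure Ω} {P' : Measure Ω'}

lemma eventually_not_isDegenerate_of_tendstoInDistribution [IsProbabilityMeasure P]
    [IsProbabilityMeasure P'] {ι : Type*} {l : Filter ι} {Y : ι → Ω → E} {Z : Ω' → E}
    (h : TendstoInDistribution Y l Z (fun _ => P) P') (hZ : ¬ IsDegenerate (P'.map Z)) :
    ∀ᶠ i in l, ¬ IsDegenerate (P.map (Y i)) :=
  h.tendsto.eventually (isClosed_setOf_isDegenerate.isOpen_compl.mem_nhds hZ)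

lemma isDegenerate_map_add_const_of_ae_mem {Y : Ω → E} {v : E}
    (hY : AEMeasurable (fun ω => Y ω + v) P) {L : Submodule ℝ E} (hL : L ≠ ⊤)
    (h : ∀ᵐ ω ∂P, Y ω ∈ L) : IsDegenerate (P.map fun ω => Y ω + v) := by
  obtain ⟨f, hf, hLf⟩ := L.exists_le_ker_of_lt_top hL.lt_top
  let g : StrongDual ℝ E := f.toContinuousLinearMap
  refine ⟨g, by simpa [g] using hf, eventuallyConst_iff_exists_eventuallyEq.2 ⟨g v, ?_⟩⟩
  refine (ae_map_iff hY (measurableSet_eq_fun g.measurable measurable_const)).2 ?_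
  filter_upwards [h] with ω hω
  have hgY : g (Y ω) = 0 := hLf hω
  rw [map_add, hgY, zero_add]

end Degenerate

section NormalizedLimit

lemma exists_tendsto_inv_norm_smul_of_not_tendsto_zero {V : Type*} [NormedAddCommGroup V]
    [NormedSpace ℝ V] [ProperSpace V] {u : ℕ → V} (hu : ¬ Tendsto u atTop (𝓝 0)) :
    ∃ φ : ℕ → ℕ, StrictMono φ ∧ (∃ C, ∀ n, ‖u (φ n)‖⁻¹ ≤ C) ∧
      ∃ v ≠ 0, Tendsto (fun n => ‖u (φ n)‖⁻¹ • u (φ n)) atTop (𝓝 v) := by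
  obtain ⟨ε, hε, hfreq⟩ : ∃ ε > 0, ∃ᶠ n in atTop, ε ≤ ‖u n‖ := by
    contrapose! hu
    exact Metric.tendsto_nhds.2 fun ε hε => by simpa using hu ε hε
  obtain ⟨φ, hφ, hlarge⟩ := extraction_of_frequently_atTop hfreq
  have hne : ∀ n, u (φ n) ≠ 0 := fun n => norm_pos_iff.1 (hε.trans_le (hlarge n))
  obtain ⟨v, hv, ψ, hψ, hlim⟩ := (isCompact_sphere (0 : V) 1).tendsto_subseq
    (x := fun n => ‖u (φ n)‖⁻¹ • u (φ n))
    fun n => mem_sphere_zero_iff_norm.2 (norm_smul_inv_norm (𝕜 := ℝ) (hne n))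
  exact ⟨φ ∘ ψ, hφ.comp hψ, ⟨ε⁻¹, fun n => inv_anti₀ hε (hlarge _)⟩, v,
    ne_zero_of_mem_unit_sphere ⟨v, hv⟩, hlim⟩

lemma ae_eq_zero_of_tendstoInMeasure_of_tendsto_smul {𝕜 Ω F : Type*} [MeasurableSpace Ω]
    {P : Measure Ω} [NormedField 𝕜] [NormedAddCommGroup F] [NormedSpace 𝕜 F] {f : ℕ → Ω → F}
    {g : Ω → F} {r : ℕ → 𝕜} {C : ℝ} (hf : TendstoInMeasure P f atTop 0) (hr : ∀ n, ‖r n‖ ≤ C)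
    (hg : ∀ᵐ ω ∂P, Tendsto (fun n => r n • f n ω) atTop (𝓝 (g ω))) : g =ᵐ[P] 0 := by
  obtain ⟨φ, hφ, hae⟩ := hf.exists_seq_tendsto_ae
  filter_upwards [hg, hae] with ω hgω hω
  have hzero : Tendsto (fun n => r (φ n) • f (φ n) ω) atTop (𝓝 0) :=
    (isBoundedUnder_of ⟨C, fun n => hr (φ n)⟩).smul_tendsto_zero hω
  exact tendsto_nhds_unique (hgω.comp hφ.tendsto_atTop) hzero

lemma exists_ne_zero_forall_ae_apply_eq_zero {Ω E F : Type*} [MeasurableSpace Ω] {P : Measure Ω}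
    [NormedAddCommGroup E] [NormedSpace ℝ E] [FiniteDimensional ℝ E] [NormedAddCommGroup F]
    [NormedSpace ℝ F] [FiniteDimensional ℝ F] {A : ℕ → E →L[ℝ] F}
    (hA : ¬ Tendsto A atTop (𝓝 0)) :
    ∃ B : E →L[ℝ] F, B ≠ 0 ∧ ∀ Y : Ω → E,
      TendstoInMeasure P (fun n ω => A n (Y ω)) atTop 0 → ∀ᵐ ω ∂P, B (Y ω) = 0 := by
  obtain ⟨φ, hφ, ⟨C, hC⟩, B, hB, hlim⟩ := exists_tendsto_inv_norm_smul_of_not_tendsto_zero hA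
  refine ⟨B, hB, fun Y hY => ?_⟩
  refine ae_eq_zero_of_tendstoInMeasure_of_tendsto_smul (r := fun n => ‖A (φ n)‖⁻¹)
    (hY.comp hφ.tendsto_atTop) (fun n => by simpa using hC n) (ae_of_all P fun ω => ?_)
  exact ((continuous_eval_const (Y ω)).tendsto B).comp hlim

end NormalizedLimit

lemma ker_ne_top_of_ne_zero {R M N : Type*} [Semiring R] [TopologicalSpace M] [AddCommMonoid M]
    [Module R M] [TopologicalSpace N] [AddCommMonoid N] [Module R N] {f : M →L[R] N}
    (hf : f ≠ 0) : f.toLinearMap.ker ≠ ⊤ :=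
  fun h => hf (ContinuousLinearMap.coe_injective (LinearMap.ker_eq_top.1 h))

lemma map_ne_top_of_ne_top {K V : Type*} [DivisionRing K] [AddCommGroup V] [Module K V]
    [FiniteDimensional K V] (f : V →ₗ[K] V) {L : Submodule K V} (hL : L ≠ ⊤) : L.map f ≠ ⊤ := by
  intro htop
  have hle : Module.finrank K (L.map f) ≤ Module.finrank K L := Submodule.finrank_map_le f L
  rw [htop, finrank_top] at hle
  exact (Submodule.finrank_lt hL).not_ge hle

section Normalizers

variable {E Ω Ω' ι : Type*} [NormedAddCommGroup E] [NormedSpace ℝ E] [FiniteDimensional ℝ E]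
  [MeasurableSpace E] [OpensMeasurableSpace E] [MeasurableSpace Ω] [MeasurableSpace Ω']
  {P : Measure Ω} {P' : Measure Ω'}

theorem normalizers_tendsto_zero_and_eventually_invertible_general [IsProbabilityMeasure P]
    [IsProbabilityMeasure P'] {X : ι → Ω → E} {s : ℕ → Finset ι} {A : ℕ → E →L[ℝ] E} {b : ℕ → E}
    {Z : Ω' → E} (hZ : ¬ IsDegenerate (P'.map Z))
    (hX : ∀ n, ∀ j ∈ s n, TendstoInMeasure P (fun m ω => A m (X j ω)) atTop 0)
    (hconv : TendstoInDistribution (fun n ω => A n (∑ j ∈ s n, X j ω) + b n) atTop Z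
      (fun _ => P) P') :
    Tendsto A atTop (𝓝 0) ∧ ∀ᶠ n in atTop, IsUnit (A n) := by
  have hlaw := eventually_not_isDegenerate_of_tendstoInDistribution hconv hZ
  constructor
  · by_contra hA
    obtain ⟨B, hB, hBX⟩ := exists_ne_zero_forall_ae_apply_eq_zero (P := P) hA
    obtain ⟨n, hn⟩ := hlaw.exists
    refine hn (isDegenerate_map_add_const_of_ae_mem (hconv.forall_aemeasurable n)
      (map_ne_top_of_ne_top (A n).toLinearMap (ker_ne_top_of_ne_zero hB)) ?_)
    have hXker : ∀ᵐ ω ∂P, ∀ j ∈ s n, B (X j ω) = 0 :=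
      (Finset.eventually_all _).2 fun j hj => hBX _ (hX n j hj)
    filter_upwards [hXker] with ω hω
    exact Submodule.mem_map_of_mem (Submodule.sum_mem _ hω)
  · filter_upwards [hlaw] with n hn
    rw [ContinuousLinearMap.isUnit_iff_isUnit_toLinearMap, LinearMap.isUnit_iff_range_eq_top]
    by_contra hrange
    refine hn (isDegenerate_map_add_const_of_ae_mem (hconv.forall_aemeasurable n) hrange ?_)
    exact ae_of_all P fun ω => LinearMap.mem_range_self _ _

end Normalizers

section MulVec

variable (𝕜 n : Type*) [NontriviallyNormedField 𝕜] [CompleteSpace 𝕜] [Fintype n] [DecidableEq n]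

/-- The operator `x ↦ A *ᵥ x` on `n → 𝕜`, as an algebra isomorphism in the matrix `A`. -/
noncomputable def mulVecCLM : Matrix n n 𝕜 ≃ₐ[𝕜] ((n → 𝕜) →L[𝕜] (n → 𝕜)) :=
  Matrix.toLinAlgEquiv'.trans (Module.End.toContinuousLinearMap (n → 𝕜))

lemma isInducing_mulVecCLM : IsInducing (mulVecCLM 𝕜 n) :=
  (mulVecCLM 𝕜 n).toLinearEquiv.toContinuousLinearEquiv.toHomeomorph.isInducing

end MulVec

section LawsOnRd

variable {d : ℕ}

lemma IsFull.not_isDegenerate {μ : Measure (Fin d → ℝ)} [IsProbabilityMeasure μ] (h : IsFull μ) :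
    ¬ IsDegenerate μ := by
  rintro ⟨f, hf, hconst⟩
  obtain ⟨c, hc⟩ := eventuallyConst_iff_exists_eventuallyEq.1 hconst
  obtain ⟨v, hv⟩ := hc.exists
  refine (h v _ (ker_ne_top_of_ne_zero hf)).ne ?_
  rw [← measure_univ (μ := μ)]
  refine measure_congr (eventuallyEq_univ.2 ?_)
  filter_upwards [hc] with x hx
  exact LinearMap.sub_mem_ker_iff.2 (hx.trans hv.symm)

variable {Ω : Type*} [MeasurableSpace Ω] {P : Measure Ω}

lemma Infinitesimal.tendstoInMeasure [IsFiniteMeasure P] {X : ℕ → Ω → (Fin d → ℝ)}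
    {A : ℕ → Matrix (Fin d) (Fin d) ℝ} (h : Infinitesimal P A X) {j : ℕ} (hj : 1 ≤ j) :
    TendstoInMeasure P (fun n ω => A n *ᵥ X j ω) atTop 0 := by
  refine tendstoInMeasure_iff_measureReal_norm.2 fun ε hε => Metric.tendsto_atTop.2 fun δ hδ => ?_
  obtain ⟨N, hN⟩ := h ε hε δ hδ
  refine ⟨max N j, fun n hn => ?_⟩
  simpa [Measure.real] using hN n (le_of_max_le_left hn) j hj (le_of_max_le_right hn)

lemma WeakLim.tendstoInDistribution_id [IsProbabilityMeasure P] {Y : ℕ → Ω → (Fin d → ℝ)}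
    {μ : Measure (Fin d → ℝ)} [IsProbabilityMeasure μ] (h : WeakLim (fun n => P.map (Y n)) μ)
    (hY : ∀ n, AEMeasurable (Y n) P) :
    TendstoInDistribution Y atTop id (fun _ => P) μ where
  forall_aemeasurable := hY
  tendsto := by
    refine ProbabilityMeasure.tendsto_iff_forall_integral_tendsto.2 fun f => ?_
    simpa using h f

end LawsOnRd

/-- **Proposition 1(a).** Under infinitesimality and weak convergence to a full law,
`A_n → 0` and `A_n` is invertible for all sufficiently large `n`. -/
theorem normalizers_tendsto_zero_and_eventually_invertible
    {d : ℕ} {Ω : Type*} [MeasurableSpace Ω] (P : Measure Ω) [IsProbabilityMeasure P]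
    (X : ℕ → Ω → (Fin d → ℝ)) (hXmeas : ∀ j, Measurable (X j))
    (A : ℕ → Matrix (Fin d) (Fin d) ℝ) (b : ℕ → Fin d → ℝ)
    (μ : Measure (Fin d → ℝ)) [IsProbabilityMeasure μ] (hfull : IsFull μ)
    (hinf : Infinitesimal P A X)
    (hconv : WeakLim (fun n => P.map (fun ω => (A n).mulVec (partialSum X n ω) + b n)) μ) :
    Tendsto A atTop (𝓝 0) ∧ ∃ N : ℕ, ∀ n ≥ N, IsUnit (A n) := by
  have hsum : ∀ n, Measurable fun ω => mulVecCLM ℝ (Fin d) (A n) (partialSum X n ω) + b n := by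
    intro n
    unfold partialSum
    fun_prop
  have hX : ∀ n, ∀ j ∈ Finset.Icc 1 n,
      TendstoInMeasure P (fun m ω => mulVecCLM ℝ (Fin d) (A m) (X j ω)) atTop 0 :=
    fun n j hj => hinf.tendstoInMeasure (Finset.mem_Icc.1 hj).1
  obtain ⟨hlim, hunit⟩ := normalizers_tendsto_zero_and_eventually_invertible_general
    (by simpa using hfull.not_isDegenerate) hX
    (hconv.tendstoInDistribution_id fun n => (hsum n).aemeasurable)
  refine ⟨(isInducing_mulVecCLM ℝ (Fin d)).tendsto_nhds_iff.2 ?_, eventually_atTop.1 ?_⟩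
  · simpa [Function.comp_def] using hlim
  · exact hunit.mono fun n => (isUnit_map_iff (mulVecCLM ℝ (Fin d)) (A n)).1
end

section
/- Let X = (X_1, X_2, …) be a sequence of ℝ^d-valued random vectors with partial sums S_n := X_1 + … + X_n, let A_n be d×d real matrices and b_n ∈ ℝ^d, and assume: (ii) the triangular array (A_n X_j : 1 ≤ j ≤ n, n ≥ 1) is infinitesimal; (iii) the distributions of A_n S_n + b_n converge weakly to a full probability measure μ on ℝ^d. Then there exist invertible d×d real matrices Ã_n and vectors b̃_n ∈ ℝ^d such that conditions (ii) and (iii) hold with (Ã_n, b̃_n) in place of (A_n, b_n) (with the same limit law up to the same fullness), and Ã_{n+1} Ã_n^{−1} → I (the identity matrix) as n → ∞. -/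
open MeasureTheory Filter Topology Matrix

/-! Let `T_n x = A_n x + b_n`. Infinitesimality makes the last summand of `A_{n+1} S_{n+1}`
negligible, so both `T_n` and `T_{n+1}` carry the law of `S_n` to laws converging to the full law
`μ`. The affine symmetries of `μ` form a compact group, and by convergence of types
`T_{n+1} T_n⁻¹` approaches it: there are symmetries `g_n` with `T_{n+1} T_n⁻¹ - g_n → 0`. Choose
symmetries `C_n` with `C_{n+1} g_n = C_n`. The ratio `C_{n+1} (T_{n+1} T_n⁻¹) C_n⁻¹` of consecutive
terms of `C_n T_n` differs from `C_{n+1} g_n C_n⁻¹ = id` by a null sequence, since the `C_n` are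
bounded. Boundedness also preserves infinitesimality, and symmetries preserve the limit law.
Fullness makes `T_n` invertible for large `n`; the finitely many others are replaced. -/

section AffinePushforward

variable {E F G : Type*} [NormedAddCommGroup E] [NormedSpace ℝ E]
  [NormedAddCommGroup F] [NormedSpace ℝ F] [NormedAddCommGroup G] [NormedSpace ℝ G]

instance finiteDimensional_continuousAffineMap [FiniteDimensional ℝ E] [FiniteDimensional ℝ F] :
    FiniteDimensional ℝ (E →ᴬ[ℝ] F) :=
  (ContinuousAffineMap.decompLinearIsometryEquiv ℝ ℝ E F).toLinearEquiv.symm.finiteDimensional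

instance properSpace_continuousAffineMap [FiniteDimensional ℝ E] [FiniteDimensional ℝ F] :
    ProperSpace (E →ᴬ[ℝ] F) :=
  FiniteDimensional.proper_real _

lemma continuous_continuousAffineMap_eval :
    Continuous fun p : (E →ᴬ[ℝ] F) × E => p.1 p.2 := by
  let e := ContinuousAffineMap.decompLinearIsometryEquiv ℝ ℝ E F
  have hdecomp (p : (E →ᴬ[ℝ] F) × E) : p.1 p.2 = (e p.1).2 p.2 + (e p.1).1 :=
    congrFun p.1.decomp p.2
  simp only [hdecomp]
  have he : Continuous fun p : (E →ᴬ[ℝ] F) × E => e p.1 := e.continuous.comp continuous_fst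
  exact (he.snd.clm_apply continuous_snd).add he.fst

variable [MeasurableSpace E] [BorelSpace E] [MeasurableSpace F] [BorelSpace F]
  [MeasurableSpace G] [BorelSpace G]

/-- The law `T_* ν` of `T x` for `x` distributed according to `ν`. -/
noncomputable def pushforward (T : E →ᴬ[ℝ] F) (ν : ProbabilityMeasure E) : ProbabilityMeasure F :=
  ν.map T.continuous.measurable.aemeasurable

lemma toMeasure_pushforward (T : E →ᴬ[ℝ] F) (ν : ProbabilityMeasure E) :
    (pushforward T ν : Measure F) = (ν : Measure E).map T :=
  ProbabilityMeasure.toMeasure_map ..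

lemma pushforward_comp (S : F →ᴬ[ℝ] G) (T : E →ᴬ[ℝ] F) (ν : ProbabilityMeasure E) :
    pushforward (S.comp T) ν = pushforward S (pushforward T ν) := by
  apply ProbabilityMeasure.toMeasure_injective
  simp only [toMeasure_pushforward]
  rw [Measure.map_map S.continuous.measurable T.continuous.measurable, ContinuousAffineMap.coe_comp]

lemma pushforward_id (ν : ProbabilityMeasure E) :
    pushforward (ContinuousAffineMap.id ℝ E) ν = ν := by
  apply ProbabilityMeasure.toMeasure_injective
  rw [toMeasure_pushforward, ContinuousAffineMap.coe_id, Measure.map_id]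

lemma pushforward_eq_diracProba_zero_iff {T : E →ᴬ[ℝ] F} {ν : ProbabilityMeasure E} :
    pushforward T ν = diracProba 0 ↔ ∀ᵐ x ∂(ν : Measure E), T x = 0 := by
  rw [← ProbabilityMeasure.toMeasure_injective.eq_iff, toMeasure_pushforward]
  refine ⟨fun h => ?_, fun h => ?_⟩
  · have hdirac : ∀ᵐ y ∂(ν : Measure E).map T, y = 0 := by
      rw [h]
      exact (ae_dirac_iff (measurableSet_singleton 0)).2 rfl
    exact ae_of_ae_map T.continuous.measurable.aemeasurable hdirac
  · rw [Measure.map_congr h, Measure.map_const, measure_univ, one_smul]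
    rfl

lemma continuous_pushforward [FiniteDimensional ℝ E] [FiniteDimensional ℝ F] :
    Continuous fun p : (E →ᴬ[ℝ] F) × ProbabilityMeasure E => pushforward p.1 p.2 := by
  borelize (E →ᴬ[ℝ] F)
  have heval := continuous_continuousAffineMap_eval (E := E) (F := F)
  have hmap (p : (E →ᴬ[ℝ] F) × ProbabilityMeasure E) : pushforward p.1 p.2 =
      ((diracProba p.1).prod p.2).map heval.measurable.aemeasurable := by
    apply ProbabilityMeasure.toMeasure_injective
    rw [toMeasure_pushforward, ProbabilityMeasure.toMeasure_map, ProbabilityMeasure.toMeasure_prod,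
      diracProba, ProbabilityMeasure.coe_mk, Measure.dirac_prod,
      Measure.map_map heval.measurable measurable_prodMk_left]
    rfl
  simp only [hmap]
  exact (ProbabilityMeasure.continuous_map heval).comp <| ProbabilityMeasure.continuous_prod.comp <|
    (continuous_diracProba.comp continuous_fst).prodMk continuous_snd

end AffinePushforward

/-- A measure is affinely full if no proper affine subspace carries all of its mass. -/
def IsAffinelyFull {E : Type*} [AddCommGroup E] [Module ℝ E] [MeasurableSpace E]
    (μ : Measure E) : Prop :=
  ∀ s : AffineSubspace ℝ E, (∀ᵐ x ∂μ, x ∈ s) → s = ⊤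

section IsAffinelyFull

variable {E F ι : Type*} [NormedAddCommGroup E] [NormedSpace ℝ E] [MeasurableSpace E]
  [NormedAddCommGroup F] [NormedSpace ℝ F]

lemma IsAffinelyFull.eq_zero_of_ae_eq_zero {μ : Measure E} (hμ : IsAffinelyFull μ)
    {T : E →ᴬ[ℝ] F} (hT : ∀ᵐ x ∂μ, T x = 0) : T = 0 := by
  have htop := hμ ((AffineSubspace.mk' (0 : F) ⊥).comap (T : E →ᵃ[ℝ] F)) <| by
    filter_upwards [hT] with x hx
    simp [AffineSubspace.mem_comap, hx]
  ext x
  simpa [AffineSubspace.mem_comap] using (htop ▸ AffineSubspace.mem_top ℝ E x :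
    x ∈ (AffineSubspace.mk' (0 : F) ⊥).comap (T : E →ᵃ[ℝ] F))

lemma exists_ne_zero_ae_eq_zero_of_not_isAffinelyFull [FiniteDimensional ℝ E] {μ : Measure E}
    [NeZero μ] (hμ : ¬ IsAffinelyFull μ) : ∃ f : E →ᴬ[ℝ] ℝ, f ≠ 0 ∧ ∀ᵐ x ∂μ, f x = 0 := by
  rw [IsAffinelyFull] at hμ
  push Not at hμ
  obtain ⟨s, hs, hs_top⟩ := hμ
  obtain ⟨p, hp⟩ := hs.exists
  have hdir : s.direction < ⊤ := lt_top_iff_ne_top.2 <|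
    mt (AffineSubspace.direction_eq_top_iff_of_nonempty ⟨p, hp⟩).1 hs_top
  obtain ⟨φ, hφ, hker⟩ := s.direction.exists_le_ker_of_lt_top hdir
  refine ⟨φ.toContinuousLinearMap.toContinuousAffineMap - .const ℝ E (φ p), fun h => hφ ?_, ?_⟩
  · ext x
    simpa using DFunLike.congr_fun (congrArg ContinuousAffineMap.contLinear h) x
  · filter_upwards [hs] with x hx
    have hx : φ (x - p) = 0 := hker (s.vsub_mem_direction hx hp)
    simpa [map_sub] using hx

variable [MeasurableSpace F] [BorelSpace F]

lemma IsAffinelyFull.surjective_of_map [FiniteDimensional ℝ F] {ν : Measure E} {T : E →ᴬ[ℝ] F}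
    (hT : IsAffinelyFull (ν.map T)) : Function.Surjective T := by
  let R : AffineSubspace ℝ F := (⊤ : AffineSubspace ℝ E).map (T : E →ᵃ[ℝ] F)
  have hR : (R : Set F) = Set.range T := by simp [R]
  have hmeas : MeasurableSet (Set.range T) := hR ▸ R.closed_of_finiteDimensional.measurableSet
  have htop : R = ⊤ := hT R <| by
    filter_upwards [ae_map_mem_range T hmeas ν] with y hy
    rwa [← SetLike.mem_coe, hR]
  rw [← Set.range_eq_univ, ← hR, htop, AffineSubspace.top_coe]

variable [FiniteDimensional ℝ E] [BorelSpace E] [FiniteDimensional ℝ F]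
  {l : Filter ι} {μ : ProbabilityMeasure E} {ν : ι → ProbabilityMeasure E}

lemma IsAffinelyFull.not_tendsto_pushforward_diracProba_zero (hμ : IsAffinelyFull (μ : Measure E))
    [l.NeBot] (hν : Tendsto ν l (𝓝 μ)) {T : ι → E →ᴬ[ℝ] F} (hT : ∀ᶠ i in l, ‖T i‖ = 1) :
    ¬ Tendsto (fun i => pushforward (T i) (ν i)) l (𝓝 (diracProba 0)) := by
  intro hlim
  let U := Ultrafilter.of l
  have hU : ↑U ≤ l := Ultrafilter.of_le l
  have hsphere : ∀ᶠ i in (U : Filter ι), T i ∈ Metric.sphere 0 1 :=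
    hU (hT.mono fun i hi => mem_sphere_zero_iff_norm.2 hi)
  obtain ⟨T₀, hT₀, hTlim⟩ := (isCompact_sphere (0 : E →ᴬ[ℝ] F) 1).ultrafilter_le_nhds' (U.map T)
    hsphere
  have hpush : pushforward T₀ μ = diracProba 0 := tendsto_nhds_unique
    ((continuous_pushforward.tendsto (T₀, μ)).comp
      (Tendsto.prodMk_nhds hTlim (hν.mono_left hU))) (hlim.mono_left hU)
  have hzero : T₀ = 0 := hμ.eq_zero_of_ae_eq_zero (pushforward_eq_diracProba_zero_iff.1 hpush)
  simp [hzero] at hT₀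

lemma IsAffinelyFull.eventually_nhds (hμ : IsAffinelyFull (μ : Measure E)) :
    ∀ᶠ ν : ProbabilityMeasure E in 𝓝 μ, IsAffinelyFull (ν : Measure E) := by
  by_contra hfreq
  rw [not_eventually] at hfreq
  let l := 𝓝 μ ⊓ 𝓟 {ν : ProbabilityMeasure E | ¬ IsAffinelyFull (ν : Measure E)}
  have : l.NeBot := frequently_iff_neBot.1 hfreq
  have hl : ∀ᶠ ν : ProbabilityMeasure E in l, ¬ IsAffinelyFull (ν : Measure E) :=
    mem_inf_of_right (mem_principal_self _)
  have hnull (ν : ProbabilityMeasure E) : ∃ f : E →ᴬ[ℝ] ℝ,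
      ¬ IsAffinelyFull (ν : Measure E) → ‖f‖ = 1 ∧ pushforward f ν = diracProba 0 := by
    by_cases hν : IsAffinelyFull (ν : Measure E)
    · exact ⟨0, fun h => absurd hν h⟩
    obtain ⟨f, hf, hae⟩ := exists_ne_zero_ae_eq_zero_of_not_isAffinelyFull hν
    refine ⟨‖f‖⁻¹ • f, fun _ => ⟨norm_smul_inv_norm hf, pushforward_eq_diracProba_zero_iff.2 ?_⟩⟩
    filter_upwards [hae] with x hx
    simp [hx]
  choose f hf using hnull
  refine hμ.not_tendsto_pushforward_diracProba_zero (ν := id) (T := f) (l := l) inf_le_left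
    (hl.mono fun ν hν => (hf ν hν).1) ?_
  exact tendsto_const_nhds.congr' (hl.mono fun ν hν => (hf ν hν).2.symm)

lemma IsAffinelyFull.not_tendsto_norm_atTop (hμ : IsAffinelyFull (μ : Measure E)) [l.NeBot]
    (hν : Tendsto ν l (𝓝 μ)) {T : ι → E →ᴬ[ℝ] F} {μ' : ProbabilityMeasure F}
    (hT : Tendsto (fun i => pushforward (T i) (ν i)) l (𝓝 μ')) :
    ¬ Tendsto (fun i => ‖T i‖) l atTop := by
  intro htop
  let H (c : ℝ) : F →ᴬ[ℝ] F := c • .id ℝ F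
  have hH : Tendsto (fun i => H ‖T i‖⁻¹) l (𝓝 0) := by
    simpa [H] using (tendsto_inv_atTop_zero.comp htop).smul_const (.id ℝ F : F →ᴬ[ℝ] F)
  have hrescaled : Tendsto (fun i => pushforward (‖T i‖⁻¹ • T i) (ν i)) l (𝓝 (diracProba 0)) := by
    have hzero : pushforward (0 : F →ᴬ[ℝ] F) μ' = diracProba 0 :=
      pushforward_eq_diracProba_zero_iff.2 (.of_forall fun _ => rfl)
    rw [← hzero]
    refine ((continuous_pushforward.tendsto (0, μ')).comp (hH.prodMk_nhds hT)).congr fun i => ?_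
    exact (pushforward_comp ..).symm
  refine hμ.not_tendsto_pushforward_diracProba_zero hν ?_ hrescaled
  filter_upwards [htop.eventually_gt_atTop 0] with i hi
  exact norm_smul_inv_norm (norm_pos_iff.1 hi)

end IsAffinelyFull

section AffineTransports

variable {E F G ι : Type*} [NormedAddCommGroup E] [NormedSpace ℝ E] [MeasurableSpace E]
  [BorelSpace E] [NormedAddCommGroup F] [NormedSpace ℝ F] [MeasurableSpace F] [BorelSpace F]
  [NormedAddCommGroup G] [NormedSpace ℝ G] [MeasurableSpace G] [BorelSpace G]

/-- The affine maps `T` with `T_* μ = μ'`. For `μ' = μ` full these form the symmetry group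
of `μ`. -/
def affineTransports (μ : ProbabilityMeasure E) (μ' : ProbabilityMeasure F) : Set (E →ᴬ[ℝ] F) :=
  {T | pushforward T μ = μ'}

variable {μ : ProbabilityMeasure E} {μ' : ProbabilityMeasure F} {μ'' : ProbabilityMeasure G}

lemma id_mem_affineTransports : .id ℝ E ∈ affineTransports μ μ :=
  pushforward_id μ

lemma comp_mem_affineTransports {S : F →ᴬ[ℝ] G} {T : E →ᴬ[ℝ] F}
    (hS : S ∈ affineTransports μ' μ'') (hT : T ∈ affineTransports μ μ') :
    S.comp T ∈ affineTransports μ μ'' := by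
  rw [affineTransports, Set.mem_ofPred_eq] at *
  rw [pushforward_comp, hT, hS]

lemma symm_mem_affineTransports {e : E ≃ᴬ[ℝ] F}
    (he : e.toContinuousAffineMap ∈ affineTransports μ μ') :
    e.symm.toContinuousAffineMap ∈ affineTransports μ' μ := by
  rw [affineTransports, Set.mem_ofPred_eq] at *
  rw [← he, ← pushforward_comp, ← ContinuousAffineEquiv.trans_toContinuousAffineMap,
    e.self_trans_symm]
  exact pushforward_id μ

lemma exists_cumulative_symmetries {g : ℕ → E ≃ᴬ[ℝ] E}
    (hg : ∀ n, (g n).toContinuousAffineMap ∈ affineTransports μ μ) :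
    ∃ C : ℕ → E ≃ᴬ[ℝ] E, (∀ n, (C n).toContinuousAffineMap ∈ affineTransports μ μ) ∧
      ∀ n, (g n).trans (C (n + 1)) = C n := by
  let C (n : ℕ) : E ≃ᴬ[ℝ] E := Nat.rec (.refl ℝ E) (fun k c => (g k).symm.trans c) n
  refine ⟨C, fun n => ?_, fun n => by ext x; simp [C]⟩
  induction n with
  | zero => exact id_mem_affineTransports
  | succ n ih => exact comp_mem_affineTransports ih (symm_mem_affineTransports (hg n))

variable [FiniteDimensional ℝ E] [FiniteDimensional ℝ F]

lemma IsAffinelyFull.exists_tendsto_of_tendsto_pushforward (hμ : IsAffinelyFull (μ : Measure E))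
    {U : Ultrafilter ι} {ν : ι → ProbabilityMeasure E} (hν : Tendsto ν U (𝓝 μ))
    {T : ι → E →ᴬ[ℝ] F} (hT : Tendsto (fun i => pushforward (T i) (ν i)) U (𝓝 μ')) :
    ∃ T₀ ∈ affineTransports μ μ', Tendsto T U (𝓝 T₀) := by
  have hbdd : ∃ K : ℝ, ∀ᶠ i in (U : Filter ι), ‖T i‖ < K := by
    have htop := hμ.not_tendsto_norm_atTop hν hT
    simpa only [tendsto_atTop, not_forall, Ultrafilter.eventually_not.symm, not_le] using htop
  obtain ⟨K, hK⟩ := hbdd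
  obtain ⟨T₀, -, hT₀⟩ := (isCompact_closedBall (0 : E →ᴬ[ℝ] F) K).ultrafilter_le_nhds' (U.map T)
    (hK.mono fun i hi => mem_closedBall_zero_iff.2 hi.le)
  exact ⟨T₀, tendsto_nhds_unique
    ((continuous_pushforward.tendsto (T₀, μ)).comp (Tendsto.prodMk_nhds hT₀ hν)) hT, hT₀⟩

lemma IsAffinelyFull.isCompact_affineTransports (hμ : IsAffinelyFull (μ : Measure E)) :
    IsCompact (affineTransports μ μ') := by
  refine isCompact_iff_ultrafilter_le_nhds'.2 fun U hU => ?_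
  refine hμ.exists_tendsto_of_tendsto_pushforward (T := id) (ν := fun _ => μ) tendsto_const_nhds ?_
  exact tendsto_const_nhds.congr' (Eventually.mono hU fun T hT => Eq.symm hT)

theorem IsAffinelyFull.tendsto_pushforward_iff (hμ : IsAffinelyFull (μ : Measure E))
    {l : Filter ι} {ν : ι → ProbabilityMeasure E} (hν : Tendsto ν l (𝓝 μ)) {T : ι → E →ᴬ[ℝ] F} :
    Tendsto (fun i => pushforward (T i) (ν i)) l (𝓝 μ') ↔
      Tendsto T l (𝓝ˢ (affineTransports μ μ')) := by
  refine ⟨fun h => ?_, fun h => ?_⟩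
  · refine (tendsto_iff_ultrafilter T l _).2 fun U hU => ?_
    obtain ⟨T₀, hT₀, hlim⟩ :=
      hμ.exists_tendsto_of_tendsto_pushforward (hν.mono_left hU) (h.mono_left hU)
    exact hlim.mono_right (nhds_le_nhdsSet hT₀)
  · have hpush : Tendsto (fun p : (E →ᴬ[ℝ] F) × ProbabilityMeasure E => pushforward p.1 p.2)
        (𝓝ˢ (affineTransports μ μ' ×ˢ {μ})) (𝓝ˢ {μ'}) :=
      continuous_pushforward.tendsto_nhdsSet <| by
        rintro ⟨T, _⟩ ⟨hT, rfl⟩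
        exact hT
    rw [hμ.isCompact_affineTransports.nhdsSet_prod_eq isCompact_singleton, nhdsSet_singleton,
      nhdsSet_singleton] at hpush
    exact hpush.comp (h.prodMk hν)

end AffineTransports

section Renormalization

lemma exists_tendsto_dist_of_tendsto_nhdsSet {α ι : Type*} [PseudoMetricSpace α] {K : Set α}
    (hK : IsCompact K) (hne : K.Nonempty) {l : Filter ι} {f : ι → α} (hf : Tendsto f l (𝓝ˢ K)) :
    ∃ g : ι → α, (∀ i, g i ∈ K) ∧ Tendsto (fun i => dist (f i) (g i)) l (𝓝 0) := by
  choose g hg hdist using fun i => hK.exists_infDist_eq_dist hne (f i)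
  refine ⟨g, hg, Metric.tendsto_nhds.2 fun ε hε => ?_⟩
  filter_upwards [(Metric.tendsto_nhdsSet hK hne).1 hf ε hε] with i hi
  rwa [dist_zero_right, Real.norm_of_nonneg dist_nonneg, ← hdist i]

variable {E F G H : Type*} [NormedAddCommGroup E] [NormedSpace ℝ E]
  [NormedAddCommGroup F] [NormedSpace ℝ F] [NormedAddCommGroup G] [NormedSpace ℝ G]
  [NormedAddCommGroup H] [NormedSpace ℝ H]

lemma dist_comp_comp_le (C : G →ᴬ[ℝ] H) (S T : F →ᴬ[ℝ] G) (B : E →ᴬ[ℝ] F) :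
    dist ((C.comp S).comp B) ((C.comp T).comp B) ≤ ‖C‖ * (dist S T * (‖B‖ + 1)) := by
  let L : G →ᴬ[ℝ] H := C.contLinear.toContinuousAffineMap
  have hL : ‖L‖ ≤ ‖C‖ := by simp [L, ContinuousAffineMap.norm_def]
  have hdiff : (C.comp S).comp B - (C.comp T).comp B = L.comp ((S - T).comp B) := by
    ext x
    exact (C.contLinear_map_vsub (S (B x)) (T (B x))).symm
  have hST : ‖(S - T).comp B‖ ≤ dist S T * (‖B‖ + 1) :=
    calc ‖(S - T).comp B‖ ≤ ‖S - T‖ * ‖B‖ + ‖(S - T) 0‖ := ContinuousAffineMap.norm_comp_le _ _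
      _ ≤ ‖S - T‖ * ‖B‖ + ‖S - T‖ := by gcongr; exact (S - T).norm_image_zero_le
      _ = dist S T * (‖B‖ + 1) := by rw [dist_eq_norm]; ring
  calc dist ((C.comp S).comp B) ((C.comp T).comp B) = ‖L.comp ((S - T).comp B)‖ := by
        rw [dist_eq_norm, hdiff]
    _ ≤ ‖L‖ * ‖(S - T).comp B‖ + ‖L 0‖ := ContinuousAffineMap.norm_comp_le _ _
    _ = ‖L‖ * ‖(S - T).comp B‖ := by simp [L]
    _ ≤ ‖C‖ * (dist S T * (‖B‖ + 1)) := by gcongr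

variable [FiniteDimensional ℝ E]

lemma exists_toContinuousAffineMap_eq_of_surjective {T : E →ᴬ[ℝ] E}
    (hT : Function.Surjective T) : ∃ e : E ≃ᴬ[ℝ] E, e.toContinuousAffineMap = T := by
  have hlin : Function.Surjective (T : E →ᵃ[ℝ] E).linear :=
    (AffineMap.linear_surjective_iff _).2 hT
  have hinj : Function.Injective (T : E →ᵃ[ℝ] E) :=
    (AffineMap.linear_injective_iff _).1 (LinearMap.injective_iff_surjective.2 hlin)
  exact ⟨(AffineEquiv.ofBijective ⟨hinj, hT⟩).toContinuousAffineEquiv, rfl⟩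

variable [MeasurableSpace E] [BorelSpace E] {μ : ProbabilityMeasure E}

lemma exists_toContinuousAffineMap_eq_of_isAffinelyFull {T : E →ᴬ[ℝ] E} {ν : ProbabilityMeasure E}
    (h : IsAffinelyFull (pushforward T ν : Measure E)) :
    ∃ e : E ≃ᴬ[ℝ] E, e.toContinuousAffineMap = T := by
  rw [toMeasure_pushforward] at h
  exact exists_toContinuousAffineMap_eq_of_surjective h.surjective_of_map

lemma IsAffinelyFull.exists_eventually_toContinuousAffineMap_eq {ι : Type*} {l : Filter ι}
    (hμ : IsAffinelyFull (μ : Measure E)) {ν : ι → ProbabilityMeasure E} {T : ι → E →ᴬ[ℝ] E}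
    (hT : Tendsto (fun i => pushforward (T i) (ν i)) l (𝓝 μ)) :
    ∃ e : ι → E ≃ᴬ[ℝ] E, ∀ᶠ i in l, (e i).toContinuousAffineMap = T i := by
  have hex i : ∃ e : E ≃ᴬ[ℝ] E, IsAffinelyFull (pushforward (T i) (ν i) : Measure E) →
      e.toContinuousAffineMap = T i := by
    by_cases h : IsAffinelyFull (pushforward (T i) (ν i) : Measure E)
    · exact (exists_toContinuousAffineMap_eq_of_isAffinelyFull h).imp fun _ he _ => he
    · exact ⟨.refl ℝ E, fun h' => absurd h' h⟩
  choose e he using hex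
  exact ⟨e, (hT.eventually hμ.eventually_nhds).mono he⟩

lemma IsAffinelyFull.exists_symmetries_tendsto_dist (hμ : IsAffinelyFull (μ : Measure E))
    {ι : Type*} {l : Filter ι} {ν : ι → ProbabilityMeasure E} (hν : Tendsto ν l (𝓝 μ))
    {T : ι → E →ᴬ[ℝ] E} (hT : Tendsto (fun i => pushforward (T i) (ν i)) l (𝓝 μ)) :
    ∃ g : ι → E ≃ᴬ[ℝ] E, (∀ i, (g i).toContinuousAffineMap ∈ affineTransports μ μ) ∧
      Tendsto (fun i => dist (T i) (g i).toContinuousAffineMap) l (𝓝 0) := by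
  obtain ⟨S, hS, hdist⟩ := exists_tendsto_dist_of_tendsto_nhdsSet
    (hμ.isCompact_affineTransports (μ' := μ)) ⟨_, id_mem_affineTransports⟩
    ((hμ.tendsto_pushforward_iff hν).1 hT)
  have hfull i : IsAffinelyFull (pushforward (S i) μ : Measure E) := by rwa [hS i]
  choose g hg using fun i => exists_toContinuousAffineMap_eq_of_isAffinelyFull (hfull i)
  exact ⟨g, by simpa only [hg] using ⟨hS, hdist⟩⟩

lemma IsAffinelyFull.exists_symmetries_tendsto_ratio (hμ : IsAffinelyFull (μ : Measure E))
    {σ : ℕ → ProbabilityMeasure E} {e : ℕ → E ≃ᴬ[ℝ] E}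
    (hlim : Tendsto (fun n => pushforward (e n).toContinuousAffineMap (σ n)) atTop (𝓝 μ))
    (hnext : Tendsto (fun n => pushforward (e (n + 1)).toContinuousAffineMap (σ n)) atTop (𝓝 μ)) :
    ∃ C : ℕ → E ≃ᴬ[ℝ] E, (∀ n, (C n).toContinuousAffineMap ∈ affineTransports μ μ) ∧
      Tendsto (fun n => (((e n).trans (C n)).symm.trans
        ((e (n + 1)).trans (C (n + 1)))).toContinuousAffineMap) atTop (𝓝 (.id ℝ E)) := by
  let D (n : ℕ) : E →ᴬ[ℝ] E := ((e n).symm.trans (e (n + 1))).toContinuousAffineMap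
  have hD : Tendsto (fun n => pushforward (D n)
      (pushforward (e n).toContinuousAffineMap (σ n))) atTop (𝓝 μ) := by
    refine hnext.congr fun n => ?_
    rw [← pushforward_comp]
    congr 1
    ext x
    simp [D]
  obtain ⟨g, hg, hdist⟩ := hμ.exists_symmetries_tendsto_dist hlim hD
  obtain ⟨C, hC, hCg⟩ := exists_cumulative_symmetries hg
  obtain ⟨K, hK, hbound⟩ :=
    (hμ.isCompact_affineTransports (μ' := μ)).isBounded.exists_pos_norm_le
  refine ⟨C, hC, tendsto_iff_dist_tendsto_zero.2 <| squeeze_zero (fun _ => dist_nonneg)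
    (g := fun n => K * (dist (D n) (g n).toContinuousAffineMap * (K + 1))) (fun n => ?_)
    (by simpa using (hdist.mul_const (K + 1)).const_mul K)⟩
  have hid : .id ℝ E = ((C (n + 1)).toContinuousAffineMap.comp
      (g n).toContinuousAffineMap).comp (C n).symm.toContinuousAffineMap := by
    ext x
    simpa using (DFunLike.congr_fun (hCg n) ((C n).symm x)).symm
  calc
    _ ≤ ‖(C (n + 1)).toContinuousAffineMap‖ *
        (dist (D n) (g n).toContinuousAffineMap * (‖(C n).symm.toContinuousAffineMap‖ + 1)) := by
        nth_rewrite 1 [hid]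
        exact dist_comp_comp_le (C (n + 1)).toContinuousAffineMap (D n) (g n).toContinuousAffineMap
          (C n).symm.toContinuousAffineMap
    _ ≤ K * (dist (D n) (g n).toContinuousAffineMap * (K + 1)) := by
        gcongr
        · exact hbound _ (hC (n + 1))
        · exact hbound _ (symm_mem_affineTransports (hC n))

theorem IsAffinelyFull.exists_equivs_tendsto_ratio (hμ : IsAffinelyFull (μ : Measure E))
    {σ : ℕ → ProbabilityMeasure E} {T : ℕ → E →ᴬ[ℝ] E}
    (hlim : Tendsto (fun n => pushforward (T n) (σ n)) atTop (𝓝 μ))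
    (hnext : Tendsto (fun n => pushforward (T (n + 1)) (σ n)) atTop (𝓝 μ)) :
    ∃ N : ℕ → E ≃ᴬ[ℝ] E,
      (∃ K > 0, ∀ᶠ n in atTop, ∀ x,
        ‖(N n).toContinuousAffineMap.contLinear x‖ ≤ K * ‖(T n).contLinear x‖) ∧
      Tendsto (fun n => pushforward (N n).toContinuousAffineMap (σ n)) atTop (𝓝 μ) ∧
      Tendsto (fun n => ((N n).symm.trans (N (n + 1))).toContinuousAffineMap) atTop
        (𝓝 (.id ℝ E)) := by
  obtain ⟨e, he⟩ := hμ.exists_eventually_toContinuousAffineMap_eq hlim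
  have he_next := (tendsto_add_atTop_nat 1).eventually he
  obtain ⟨C, hC, hratio⟩ := hμ.exists_symmetries_tendsto_ratio (σ := σ) (e := e)
    (hlim.congr' (he.mono fun n hn => by rw [← hn]))
    (hnext.congr' (he_next.mono fun n hn => by rw [← hn]))
  have hN : ∀ᶠ n in atTop, ((e n).trans (C n)).toContinuousAffineMap =
      (C n).toContinuousAffineMap.comp (T n) :=
    he.mono fun n hn => by rw [ContinuousAffineEquiv.trans_toContinuousAffineMap, hn]
  obtain ⟨K, hK, hbound⟩ :=
    (hμ.isCompact_affineTransports (μ' := μ)).isBounded.exists_pos_norm_le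
  refine ⟨fun n => (e n).trans (C n), ⟨K, hK, hN.mono fun n hn x => ?_⟩, ?_, hratio⟩
  · rw [hn, ContinuousAffineMap.comp_contLinear]
    exact ContinuousLinearMap.le_of_opNorm_le _
      ((ContinuousAffineMap.norm_contLinear_le _).trans (hbound _ (hC n))) _
  · have hCnhds : Tendsto (fun n => (C n).toContinuousAffineMap) atTop
        (𝓝ˢ (affineTransports μ μ)) :=
      (tendsto_principal.2 (.of_forall hC)).mono_right principal_le_nhdsSet
    refine ((hμ.tendsto_pushforward_iff hlim).2 hCnhds).congr' (hN.mono fun n hn => ?_)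
    simp only [hn, pushforward_comp]

end Renormalization

section Matrices

variable {m n : Type*} [Fintype n]

/-- The affine map `x ↦ A x + b`, which treats a normalizer `A` and a centering `b` as one
object. -/
noncomputable def affineOfMatrix (A : Matrix m n ℝ) (b : m → ℝ) : (n → ℝ) →ᴬ[ℝ] (m → ℝ) :=
  A.mulVecLin.toContinuousLinearMap.toContinuousAffineMap + .const ℝ _ b

lemma affineOfMatrix_apply (A : Matrix m n ℝ) (b : m → ℝ) (x : n → ℝ) :
    affineOfMatrix A b x = A *ᵥ x + b := rfl

lemma contLinear_affineOfMatrix_apply (A : Matrix m n ℝ) (b : m → ℝ) (x : n → ℝ) :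
    (affineOfMatrix A b).contLinear x = A *ᵥ x := by
  simp [affineOfMatrix]

variable [DecidableEq n]

/-- The matrix of the linear part of an affine map, so that `T x = linMatrix T x + T 0`. -/
noncomputable def linMatrix (T : (n → ℝ) →ᴬ[ℝ] (m → ℝ)) : Matrix m n ℝ :=
  LinearMap.toMatrix' (T.contLinear : (n → ℝ) →ₗ[ℝ] (m → ℝ))

lemma linMatrix_mulVec (T : (n → ℝ) →ᴬ[ℝ] (m → ℝ)) (x : n → ℝ) :
    linMatrix T *ᵥ x = T.contLinear x :=
  LinearMap.toMatrix'_mulVec _ x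

lemma linMatrix_id : linMatrix (.id ℝ (n → ℝ)) = 1 :=
  LinearMap.toMatrix'_id

lemma affineOfMatrix_linMatrix (T : (n → ℝ) →ᴬ[ℝ] (m → ℝ)) :
    affineOfMatrix (linMatrix T) (T 0) = T := by
  ext1 x
  rw [affineOfMatrix_apply, linMatrix_mulVec]
  exact (congrFun T.decomp x).symm

variable [Fintype m]

lemma continuous_linMatrix :
    Continuous (linMatrix : ((n → ℝ) →ᴬ[ℝ] (m → ℝ)) → Matrix m n ℝ) := by
  refine continuous_matrix fun i j => ?_
  have hlin : Continuous fun T : (n → ℝ) →ᴬ[ℝ] (m → ℝ) => T.contLinear :=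
    (ContinuousAffineMap.decompLinearIsometryEquiv ℝ ℝ (n → ℝ) (m → ℝ)).continuous.snd
  simp only [linMatrix, LinearMap.toMatrix'_apply]
  exact (continuous_apply i).comp (hlin.clm_apply continuous_const)

lemma linMatrix_comp {k : Type*} [DecidableEq m] (S : (m → ℝ) →ᴬ[ℝ] (k → ℝ))
    (T : (n → ℝ) →ᴬ[ℝ] (m → ℝ)) : linMatrix (S.comp T) = linMatrix S * linMatrix T :=
  LinearMap.toMatrix'_comp _ _

variable [DecidableEq m]

lemma linMatrix_mul_linMatrix_symm (e : (n → ℝ) ≃ᴬ[ℝ] (m → ℝ)) :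
    linMatrix e.toContinuousAffineMap * linMatrix e.symm.toContinuousAffineMap = 1 := by
  rw [← linMatrix_comp, ← ContinuousAffineEquiv.trans_toContinuousAffineMap, e.symm_trans_self]
  exact linMatrix_id

lemma isUnit_linMatrix (e : (n → ℝ) ≃ᴬ[ℝ] (n → ℝ)) : IsUnit (linMatrix e.toContinuousAffineMap) :=
  .of_mul_eq_one _ (linMatrix_mul_linMatrix_symm e)

lemma linMatrix_symm_trans (e f : (n → ℝ) ≃ᴬ[ℝ] (n → ℝ)) :
    linMatrix (e.symm.trans f).toContinuousAffineMap =
      linMatrix f.toContinuousAffineMap * (linMatrix e.toContinuousAffineMap)⁻¹ := by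
  rw [Matrix.inv_eq_right_inv (linMatrix_mul_linMatrix_symm e), ← linMatrix_comp,
    ContinuousAffineEquiv.trans_toContinuousAffineMap]

end Matrices

section Infinitesimal

lemma partialSum_succ {Ω : Type*} {d : ℕ} (X : ℕ → Ω → Fin d → ℝ) (n : ℕ) (ω : Ω) :
    partialSum X (n + 1) ω = partialSum X n ω + X (n + 1) ω := by
  simp [partialSum, Finset.sum_Icc_succ_top]

variable {Ω : Type*} [MeasurableSpace Ω] {d : ℕ} {X : ℕ → Ω → Fin d → ℝ}
  {A : ℕ → Matrix (Fin d) (Fin d) ℝ}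

lemma measurable_partialSum (hX : ∀ j, Measurable (X j)) (n : ℕ) : Measurable (partialSum X n) :=
  Finset.measurable_fun_sum _ fun j _ => hX j

variable {P : Measure Ω} [IsFiniteMeasure P]

lemma Infinitesimal.of_eventually_norm_le (hA : Infinitesimal P A X)
    {A' : ℕ → Matrix (Fin d) (Fin d) ℝ} {K : ℝ} (hK : 0 < K)
    (hle : ∀ᶠ n in atTop, ∀ x, ‖A' n *ᵥ x‖ ≤ K * ‖A n *ᵥ x‖) : Infinitesimal P A' X := by
  intro ε hε δ hδ
  obtain ⟨N, hN⟩ := hA (ε / K) (by positivity) δ hδ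
  obtain ⟨M, hM⟩ := eventually_atTop.1 hle
  refine ⟨max N M, fun n hn j hj hjn => ?_⟩
  refine (measureReal_mono fun ω (hω : ε ≤ _) => ?_).trans_lt
    (hN n (le_of_max_le_left hn) j hj hjn)
  exact (div_le_iff₀' hK).2 (hω.trans (hM n (le_of_max_le_right hn) _))

lemma Infinitesimal.tendstoInMeasure_last (hA : Infinitesimal P A X) :
    TendstoInMeasure P (fun n ω => A (n + 1) *ᵥ X (n + 1) ω) atTop 0 := by
  rw [tendstoInMeasure_iff_measureReal_norm]
  intro ε hε
  rw [Metric.tendsto_atTop]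
  intro δ hδ
  obtain ⟨N, hN⟩ := hA ε hε δ hδ
  refine ⟨N, fun n hn => ?_⟩
  rw [Real.dist_0_eq_abs, abs_of_nonneg measureReal_nonneg]
  simpa [measureReal_def] using hN (n + 1) (by omega) (n + 1) (by omega) le_rfl

end Infinitesimal

section WeakLim

/-- The law of a random vector `Y` under `P`, bundled so that weak convergence of laws is
convergence in the topology of `ProbabilityMeasure`. -/
noncomputable def law {Ω E : Type*} [MeasurableSpace Ω] [MeasurableSpace E] (P : Measure Ω)
    [IsProbabilityMeasure P] (Y : Ω → E) (hY : Measurable Y) : ProbabilityMeasure E :=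
  ⟨P.map Y, Measure.isProbabilityMeasure_map hY.aemeasurable⟩

variable {Ω E F : Type*} [MeasurableSpace Ω] {P : Measure Ω} [IsProbabilityMeasure P]
  [NormedAddCommGroup E] [NormedSpace ℝ E] [MeasurableSpace E] [BorelSpace E]
  [NormedAddCommGroup F] [NormedSpace ℝ F] [MeasurableSpace F] [BorelSpace F]

lemma toMeasure_pushforward_law (T : E →ᴬ[ℝ] F) {Y : Ω → E} (hY : Measurable Y) :
    (pushforward T (law P Y hY) : Measure F) = P.map (fun ω => T (Y ω)) := by
  rw [toMeasure_pushforward]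
  exact Measure.map_map T.continuous.measurable hY

variable {d : ℕ}

lemma weakLim_iff_tendsto {ν : ℕ → ProbabilityMeasure (Fin d → ℝ)}
    {μ : ProbabilityMeasure (Fin d → ℝ)} :
    WeakLim (fun n => (ν n : Measure (Fin d → ℝ))) μ ↔ Tendsto ν atTop (𝓝 μ) :=
  ProbabilityMeasure.tendsto_iff_forall_integral_tendsto.symm

lemma weakLim_map_iff_tendsto_pushforward {Y : ℕ → Ω → Fin d → ℝ} (hY : ∀ n, Measurable (Y n))
    {A : ℕ → Matrix (Fin d) (Fin d) ℝ} {b : ℕ → Fin d → ℝ} {μ : ProbabilityMeasure (Fin d → ℝ)} :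
    WeakLim (fun n => P.map fun ω => A n *ᵥ Y n ω + b n) μ ↔
      Tendsto (fun n => pushforward (affineOfMatrix (A n) (b n)) (law P (Y n) (hY n))) atTop
        (𝓝 μ) := by
  simp only [← weakLim_iff_tendsto, toMeasure_pushforward_law, affineOfMatrix_apply]

lemma WeakLim.of_tendstoInMeasure_sub {Y Z : ℕ → Ω → Fin d → ℝ} (hY : ∀ n, Measurable (Y n))
    (hZ : ∀ n, Measurable (Z n)) {μ : Measure (Fin d → ℝ)} [IsProbabilityMeasure μ]
    (hlim : WeakLim (fun n => P.map (Y n)) μ) (hsub : TendstoInMeasure P (Y - Z) atTop 0) :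
    WeakLim (fun n => P.map (Z n)) μ := by
  have hYdist : TendstoInDistribution Y atTop id (fun _ => P) μ :=
    ⟨fun n => (hY n).aemeasurable, aemeasurable_id, by
      simp only [Measure.map_id]
      exact ProbabilityMeasure.tendsto_iff_forall_integral_tendsto.2 hlim⟩
  have hsub_rev : TendstoInMeasure P (Z - Y) atTop 0 := by
    simpa [tendstoInMeasure_iff_norm, norm_sub_rev] using hsub
  have hZdist := (tendstoInDistribution_of_tendstoInMeasure_sub Z id hYdist hsub_rev
    fun n => (hZ n).aemeasurable).tendsto
  simp only [Measure.map_id] at hZdist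
  exact ProbabilityMeasure.tendsto_iff_forall_integral_tendsto.1 hZdist

lemma IsFull.isAffinelyFull {μ : Measure (Fin d → ℝ)} [IsProbabilityMeasure μ] (hμ : IsFull μ) :
    IsAffinelyFull μ := by
  intro s hs
  obtain ⟨p, hp⟩ := hs.exists
  have hmass : μ {x | x - p ∈ s.direction} = 1 := by
    rw [← measure_univ (μ := μ)]
    refine measure_congr (eventuallyEq_univ.2 ?_)
    filter_upwards [hs] with x hx using s.vsub_mem_direction hx hp
  by_contra hne
  refine (hμ p s.direction fun htop => hne ?_).ne hmass
  exact (AffineSubspace.direction_eq_top_iff_of_nonempty ⟨p, hp⟩).1 htop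

lemma Infinitesimal.weakLim_drop_last {X : ℕ → Ω → Fin d → ℝ}
    {A : ℕ → Matrix (Fin d) (Fin d) ℝ} (hA : Infinitesimal P A X) (hX : ∀ j, Measurable (X j))
    {b : ℕ → Fin d → ℝ} {μ : Measure (Fin d → ℝ)} [IsProbabilityMeasure μ]
    (hlim : WeakLim (fun n => P.map fun ω => A n *ᵥ partialSum X n ω + b n) μ) :
    WeakLim (fun n => P.map fun ω => A (n + 1) *ᵥ partialSum X n ω + b (n + 1)) μ := by
  have hmeas (k n : ℕ) : Measurable fun ω => A k *ᵥ partialSum X n ω + b k :=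
    (affineOfMatrix (A k) (b k)).continuous.measurable.comp (measurable_partialSum hX n)
  have hshift : WeakLim
      (fun n => P.map fun ω => A (n + 1) *ᵥ partialSum X (n + 1) ω + b (n + 1)) μ :=
    fun f => (hlim f).comp (tendsto_add_atTop_nat 1)
  refine hshift.of_tendstoInMeasure_sub (fun n => hmeas _ _) (fun n => hmeas _ _) ?_
  convert hA.tendstoInMeasure_last using 1
  ext n ω i
  simp [partialSum_succ, Matrix.mulVec_add]

end WeakLim

/-- **Proposition 1(b).** Under infinitesimality and weak convergence to a full law `μ`,
one may replace `(A_n, b_n)` by `(Ã_n, b̃_n)` with `Ã_n` invertible, such that (ii) and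
(iii) still hold with the same limit `μ`, and `Ã_{n+1} Ã_n⁻¹ → I`. -/
theorem exists_modified_normalizers
    {d : ℕ} {Ω : Type*} [MeasurableSpace Ω] (P : Measure Ω) [IsProbabilityMeasure P]
    (X : ℕ → Ω → (Fin d → ℝ)) (hXmeas : ∀ j, Measurable (X j))
    (A : ℕ → Matrix (Fin d) (Fin d) ℝ) (b : ℕ → Fin d → ℝ)
    (μ : Measure (Fin d → ℝ)) [IsProbabilityMeasure μ] (hfull : IsFull μ)
    (hinf : Infinitesimal P A X)
    (hconv : WeakLim (fun n => P.map (fun ω => (A n).mulVec (partialSum X n ω) + b n)) μ) :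
    ∃ (A' : ℕ → Matrix (Fin d) (Fin d) ℝ) (b' : ℕ → Fin d → ℝ),
      (∀ n, IsUnit (A' n)) ∧
      Infinitesimal P A' X ∧
      WeakLim (fun n => P.map (fun ω => (A' n).mulVec (partialSum X n ω) + b' n)) μ ∧
      Tendsto (fun n => A' (n + 1) * (A' n)⁻¹) atTop (𝓝 1) := by
  let ν : ProbabilityMeasure (Fin d → ℝ) := ⟨μ, ‹_›⟩
  have hS := measurable_partialSum hXmeas
  obtain ⟨N, ⟨K, hK, hbound⟩, hlim, hratio⟩ := IsAffinelyFull.exists_equivs_tendsto_ratio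
    (μ := ν) hfull.isAffinelyFull ((weakLim_map_iff_tendsto_pushforward hS).1 hconv)
    ((weakLim_map_iff_tendsto_pushforward hS).1 (hinf.weakLim_drop_last hXmeas hconv))
  refine ⟨fun n => linMatrix (N n).toContinuousAffineMap, fun n => (N n).toContinuousAffineMap 0,
    fun n => isUnit_linMatrix (N n), hinf.of_eventually_norm_le hK ?_,
    (weakLim_map_iff_tendsto_pushforward (μ := ν) hS).2 ?_, ?_⟩
  · simpa only [linMatrix_mulVec, contLinear_affineOfMatrix_apply] using hbound
  · simpa only [affineOfMatrix_linMatrix] using hlim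
  · simpa only [linMatrix_symm_trans, linMatrix_id, Function.comp_def] using
      (continuous_linMatrix.tendsto (.id ℝ (Fin d → ℝ))).comp hratio
end

section
/- Let X = (X_1, X_2, …) be a sequence of ℝ^d-valued random vectors with partial sums S_n := X_1 + … + X_n, let A_n be invertible d×d real matrices and b_n ∈ ℝ^d, and assume: (i) X is strongly mixing; (ii) the triangular array (A_n X_j : 1 ≤ j ≤ n, n ≥ 1) is infinitesimal; (iii) the distributions of A_n S_n + b_n converge weakly to a full probability measure μ on ℝ^d. Then sup{‖A_n A_m^{−1}‖ : n ∈ ℕ, 1 ≤ m ≤ n} < ∞. -/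
open MeasureTheory Filter Topology Matrix

/-- Rosenblatt's measure of dependence `α(𝒜, ℬ)` between two sub-σ-fields. -/
noncomputable def alphaSig {Ω : Type*} [MeasurableSpace Ω] (P : Measure Ω)
    (m₁ m₂ : MeasurableSpace Ω) : ℝ :=
  sSup {r | ∃ A B : Set Ω, MeasurableSet[m₁] A ∧ MeasurableSet[m₂] B ∧
    r = |(P (A ∩ B)).toReal - (P A).toReal * (P B).toReal|}

/-- The strong mixing coefficient `α(X; n) = sup_{j ≥ 1} α(σ(X_k, 1 ≤ k ≤ j), σ(X_k, k ≥ j+n))`. -/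
noncomputable def alphaMix {Ω : Type*} [MeasurableSpace Ω] {d : ℕ} (P : Measure Ω)
    (X : ℕ → Ω → (Fin d → ℝ)) (n : ℕ) : ℝ :=
  ⨆ j : {j : ℕ // 1 ≤ j}, alphaSig P
    (⨆ k ∈ Set.Icc 1 (j : ℕ), MeasurableSpace.comap (X k) inferInstance)
    (⨆ k ∈ Set.Ici ((j : ℕ) + n), MeasurableSpace.comap (X k) inferInstance)

/-- The sequence `X = (X_1, X_2, ...)` is strongly mixing: `α(X; n) → 0`. -/
def StronglyMixing {Ω : Type*} [MeasurableSpace Ω] {d : ℕ} (P : Measure Ω)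
    (X : ℕ → Ω → (Fin d → ℝ)) : Prop :=
  Tendsto (alphaMix P X) atTop (𝓝 0)

attribute [local instance] Matrix.normedAddCommGroup Matrix.normedSpace

/-!
If `‖A_n A_m⁻¹‖` were unbounded over `m ≤ n` with `m` large, a normalized subsequence would yield
covectors `v_k → 0` and indices `m_k ≤ n_k`, `m_k → ∞`, with `v_k A_{n_k} = w_k A_{m_k}` and
`w_k → w ≠ 0`. Then `v_k (A_{n_k} S_{n_k} + b_{n_k}) → 0` in law, and this variable is the sum of
the head `w_k (A_{m_k} S_{m_k} + b_{m_k})`, whose law tends to the image of `μ` under `w`, of a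
block of bounded length, negligible by infinitesimality, and of a tail, which by strong mixing is
nearly independent of the head. The modulus of the characteristic function of a sum of nearly
independent variables is at most that of the head, up to a small error, so the characteristic
function of the image of `μ` under `w` has modulus `1` everywhere. That image is therefore a point
mass, and `μ` is carried by a hyperplane.
-/

section Mixing

open ProbabilityTheory

variable {Ω : Type*} {m m₁ m₂ m₀ : MeasurableSpace Ω} {P : Measure[m₀] Ω} [IsProbabilityMeasure P]

theorem abs_measureReal_inter_sub_mul_le_one (s t : Set Ω) :
    |P.real (s ∩ t) - P.real s * P.real t| ≤ 1 := by
  have hst : P.real s * P.real t ≤ 1 :=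
    mul_le_one₀ measureReal_le_one measureReal_nonneg measureReal_le_one
  rw [abs_sub_le_iff]
  constructor <;> linarith [measureReal_nonneg (μ := P) (s := s ∩ t),
    measureReal_le_one (μ := P) (s := s ∩ t),
    mul_nonneg (measureReal_nonneg (μ := P) (s := s)) (measureReal_nonneg (μ := P) (s := t))]

theorem abs_measureReal_inter_sub_mul_le_alphaSig {s t : Set Ω} (hs : MeasurableSet[m₁] s)
    (ht : MeasurableSet[m₂] t) :
    |P.real (s ∩ t) - P.real s * P.real t| ≤ alphaSig P m₁ m₂ := by
  refine le_csSup ⟨1, ?_⟩ ⟨s, t, hs, ht, rfl⟩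
  rintro _ ⟨s', t', -, -, rfl⟩
  exact abs_measureReal_inter_sub_mul_le_one s' t'

theorem alphaSig_le_one : alphaSig P m₁ m₂ ≤ 1 := by
  refine Real.sSup_le ?_ zero_le_one
  rintro _ ⟨s, t, -, -, rfl⟩
  exact abs_measureReal_inter_sub_mul_le_one s t

theorem alphaSig_le_alphaMix {d : ℕ} (X : ℕ → Ω → (Fin d → ℝ)) {j : ℕ} (hj : 1 ≤ j) (n : ℕ) :
    alphaSig P (⨆ k ∈ Set.Icc 1 j, MeasurableSpace.comap (X k) inferInstance)
      (⨆ k ∈ Set.Ici (j + n), MeasurableSpace.comap (X k) inferInstance) ≤ alphaMix P X n := by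
  refine le_ciSup (f := fun i : {i : ℕ // 1 ≤ i} => alphaSig P
    (⨆ k ∈ Set.Icc 1 (i : ℕ), MeasurableSpace.comap (X k) inferInstance)
    (⨆ k ∈ Set.Ici ((i : ℕ) + n), MeasurableSpace.comap (X k) inferInstance)) ⟨1, ?_⟩ ⟨j, hj⟩
  rintro _ ⟨i, rfl⟩
  exact alphaSig_le_one

theorem covariance_eq_integral_mul_condExp (hm : m ≤ m₀) {f g : Ω → ℝ} (hf : Measurable[m] f)
    (hf1 : ∀ ω, |f ω| ≤ 1) (hg : Integrable g P) :
    cov[f, g; P] = ∫ ω, f ω * P[fun ω => g ω - P[g] | m] ω ∂P := by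
  have hfP : AEStronglyMeasurable f P := (hf.mono hm le_rfl).aestronglyMeasurable
  have hg₀ : Integrable (fun ω => g ω - P[g]) P := hg.sub (integrable_const _)
  have hfg : Integrable (fun ω => f ω * (g ω - P[g])) P := hg₀.bdd_mul hfP (ae_of_all _ hf1)
  calc cov[f, g; P]
      = ∫ ω, f ω * (g ω - P[g]) ∂P - P[f] * ∫ ω, (g ω - P[g]) ∂P := by
        rw [covariance, ← integral_const_mul, ← integral_sub hfg (hg₀.const_mul _)]
        simp only [sub_mul]
    _ = ∫ ω, f ω * (g ω - P[g]) ∂P := by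
        rw [integral_sub hg (integrable_const _)]
        simp
    _ = ∫ ω, P[f * fun ω => g ω - P[g] | m] ω ∂P := (integral_condExp hm).symm
    _ = ∫ ω, f ω * P[fun ω => g ω - P[g] | m] ω ∂P :=
        integral_congr_ae
          (condExp_mul_of_stronglyMeasurable_left hf.stronglyMeasurable hfg hg₀)

-- Among `[-1, 1]`-valued `m`-measurable functions, the covariance with `g` is maximized by the sign
-- of `P[g | m] - P[g]`.
theorem exists_covariance_le_two_mul_covariance_indicator (hm : m ≤ m₀) {g : Ω → ℝ}
    (hg : Integrable g P) :
    ∃ s, MeasurableSet[m] s ∧ ∀ f : Ω → ℝ, Measurable[m] f → (∀ ω, |f ω| ≤ 1) →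
      cov[f, g; P] ≤ 2 * cov[s.indicator 1, g; P] := by
  set h := P[fun ω => g ω - P[g] | m] with hh
  have hhm : Measurable[m] h := stronglyMeasurable_condExp.measurable
  have hhi : Integrable h P := integrable_condExp
  have hh₀ : ∫ ω, h ω ∂P = 0 := by
    rw [hh, integral_condExp hm, integral_sub hg (integrable_const _)]
    simp
  have hs : MeasurableSet[m] {ω | 0 ≤ h ω} := measurableSet_le measurable_const hhm
  refine ⟨{ω | 0 ≤ h ω}, hs, fun f hf hf1 => ?_⟩
  have hind : cov[{ω | 0 ≤ h ω}.indicator 1, g; P] = ∫ ω, {ω | 0 ≤ h ω}.indicator h ω ∂P := by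
    rw [covariance_eq_integral_mul_condExp hm
      (measurable_const.indicator hs : Measurable[m] (Set.indicator _ 1)) (fun ω => ?_) hg]
    · simp only [Set.indicator_apply, Pi.one_apply, ite_mul, one_mul, zero_mul, hh]
    · by_cases hω : 0 ≤ h ω <;> simp [hω]
  calc cov[f, g; P] = ∫ ω, f ω * h ω ∂P := covariance_eq_integral_mul_condExp hm hf hf1 hg
    _ ≤ ∫ ω, (2 * {ω | 0 ≤ h ω}.indicator h ω - h ω) ∂P := by
        refine integral_mono
          (hhi.bdd_mul (hf.mono hm le_rfl).aestronglyMeasurable (ae_of_all _ hf1))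
          (((hhi.indicator (hm _ hs)).const_mul 2).sub hhi) fun ω => ?_
        have hfω := abs_le.1 (hf1 ω)
        by_cases hω : 0 ≤ h ω <;> simp only [Set.indicator_apply, Set.mem_ofPred_eq, hω, if_true,
          if_false] <;> nlinarith
    _ = 2 * cov[{ω | 0 ≤ h ω}.indicator 1, g; P] := by
        rw [hind, integral_sub ((hhi.indicator (hm _ hs)).const_mul 2) hhi, hh₀, sub_zero,
          integral_const_mul]

theorem covariance_indicator_one {s t : Set Ω} (hs : MeasurableSet s) (ht : MeasurableSet t) :
    cov[s.indicator 1, t.indicator 1; P] = P.real (s ∩ t) - P.real s * P.real t := by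
  have hLp {u : Set Ω} (hu : MeasurableSet u) : MemLp (u.indicator (1 : Ω → ℝ)) 2 P :=
    (memLp_const 1).indicator hu
  rw [covariance_eq_sub (hLp hs) (hLp ht), ← Set.inter_indicator_one,
    integral_indicator_one (hs.inter ht), integral_indicator_one hs, integral_indicator_one ht]

theorem covariance_le_four_mul_alphaSig (hm₁ : m₁ ≤ m₀) (hm₂ : m₂ ≤ m₀) {f g : Ω → ℝ}
    (hf : Measurable[m₁] f) (hg : Measurable[m₂] g) (hf1 : ∀ ω, |f ω| ≤ 1)
    (hg1 : ∀ ω, |g ω| ≤ 1) : cov[f, g; P] ≤ 4 * alphaSig P m₁ m₂ := by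
  have hgi : Integrable g P :=
    .of_bound (hg.mono hm₂ le_rfl).aestronglyMeasurable 1 (ae_of_all _ hg1)
  obtain ⟨s, hs, hfs⟩ := exists_covariance_le_two_mul_covariance_indicator hm₁ hgi
  have hsi : Integrable (s.indicator (1 : Ω → ℝ)) P := (integrable_const 1).indicator (hm₁ _ hs)
  obtain ⟨t, ht, hgt⟩ := exists_covariance_le_two_mul_covariance_indicator hm₂ hsi
  calc cov[f, g; P] ≤ 2 * cov[g, s.indicator 1; P] := by
        rw [covariance_comm g]
        exact hfs f hf hf1
    _ ≤ 2 * (2 * cov[t.indicator 1, s.indicator 1; P]) := by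
        gcongr
        exact hgt g hg hg1
    _ = 4 * (P.real (s ∩ t) - P.real s * P.real t) := by
        rw [covariance_comm, covariance_indicator_one (hm₁ _ hs) (hm₂ _ ht)]
        ring
    _ ≤ 4 * alphaSig P m₁ m₂ := by
        gcongr
        exact (le_abs_self _).trans (abs_measureReal_inter_sub_mul_le_alphaSig hs ht)

theorem abs_covariance_le_four_mul_alphaSig (hm₁ : m₁ ≤ m₀) (hm₂ : m₂ ≤ m₀) {f g : Ω → ℝ}
    (hf : Measurable[m₁] f) (hg : Measurable[m₂] g) (hf1 : ∀ ω, |f ω| ≤ 1)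
    (hg1 : ∀ ω, |g ω| ≤ 1) : |cov[f, g; P]| ≤ 4 * alphaSig P m₁ m₂ := by
  refine abs_le'.2 ⟨covariance_le_four_mul_alphaSig hm₁ hm₂ hf hg hf1 hg1, ?_⟩
  rw [← covariance_neg_left]
  exact covariance_le_four_mul_alphaSig hm₁ hm₂ hf.neg hg (by simpa using hf1) hg1

theorem integral_mul_sub_integral_mul_integral_eq_covariance {f g : Ω → ℂ} (hf : MemLp f 2 P)
    (hg : MemLp g 2 P) :
    ∫ ω, f ω * g ω ∂P - (∫ ω, f ω ∂P) * ∫ ω, g ω ∂P =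
      ⟨cov[fun ω => (f ω).re, fun ω => (g ω).re; P] - cov[fun ω => (f ω).im, fun ω => (g ω).im; P],
        cov[fun ω => (f ω).re, fun ω => (g ω).im; P] +
          cov[fun ω => (f ω).im, fun ω => (g ω).re; P]⟩ := by
  have hfr : MemLp (fun ω => (f ω).re) 2 P := hf.re
  have hfi : MemLp (fun ω => (f ω).im) 2 P := hf.im
  have hgr : MemLp (fun ω => (g ω).re) 2 P := hg.re
  have hgi : MemLp (fun ω => (g ω).im) 2 P := hg.im
  have hre {h : Ω → ℂ} (hh : Integrable h P) : (∫ ω, h ω ∂P).re = ∫ ω, (h ω).re ∂P :=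
    (integral_re hh).symm
  have him {h : Ω → ℂ} (hh : Integrable h P) : (∫ ω, h ω ∂P).im = ∫ ω, (h ω).im ∂P :=
    (integral_im hh).symm
  have hmul {u v : Ω → ℝ} (hu : MemLp u 2 P) (hv : MemLp v 2 P) :
      Integrable (fun ω => u ω * v ω) P := hu.integrable_mul hv
  have hfL := hf.integrable one_le_two
  have hgL := hg.integrable one_le_two
  have hfgL : Integrable (fun ω => f ω * g ω) P := hf.integrable_mul hg
  rw [covariance_eq_sub hfr hgr, covariance_eq_sub hfi hgi,
    covariance_eq_sub hfr hgi, covariance_eq_sub hfi hgr]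
  apply Complex.ext
  · simp only [Complex.sub_re, Complex.mul_re, hre hfL, hre hgL, him hfL, him hgL, hre hfgL,
      Pi.mul_apply]
    rw [integral_sub (hmul hfr hgr) (hmul hfi hgi)]
    ring
  · simp only [Complex.sub_im, Complex.mul_im, hre hfL, hre hgL, him hfL, him hgL, him hfgL,
      Pi.mul_apply]
    rw [integral_add (hmul hfr hgi) (hmul hfi hgr)]
    ring

theorem norm_integral_mul_sub_integral_mul_integral_le (hm₁ : m₁ ≤ m₀) (hm₂ : m₂ ≤ m₀)
    {f g : Ω → ℂ} (hf : Measurable[m₁] f) (hg : Measurable[m₂] g) (hf1 : ∀ ω, ‖f ω‖ ≤ 1)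
    (hg1 : ∀ ω, ‖g ω‖ ≤ 1) :
    ‖∫ ω, f ω * g ω ∂P - (∫ ω, f ω ∂P) * ∫ ω, g ω ∂P‖ ≤ 16 * alphaSig P m₁ m₂ := by
  rw [integral_mul_sub_integral_mul_integral_eq_covariance
    (.of_bound (hf.mono hm₁ le_rfl).aestronglyMeasurable 1 (ae_of_all _ hf1))
    (.of_bound (hg.mono hm₂ le_rfl).aestronglyMeasurable 1 (ae_of_all _ hg1))]
  have hcov {u v : ℂ → ℝ} (hu : Measurable u) (hv : Measurable v) (hu1 : ∀ z, |u z| ≤ ‖z‖)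
      (hv1 : ∀ z, |v z| ≤ ‖z‖) :
      |cov[fun ω => u (f ω), fun ω => v (g ω); P]| ≤ 4 * alphaSig P m₁ m₂ :=
    abs_covariance_le_four_mul_alphaSig hm₁ hm₂ (hu.comp hf) (hv.comp hg)
      (fun ω => (hu1 _).trans (hf1 ω)) fun ω => (hv1 _).trans (hg1 ω)
  have hrr := hcov Complex.measurable_re Complex.measurable_re Complex.abs_re_le_norm
    Complex.abs_re_le_norm
  have hii := hcov Complex.measurable_im Complex.measurable_im Complex.abs_im_le_norm
    Complex.abs_im_le_norm
  have hri := hcov Complex.measurable_re Complex.measurable_im Complex.abs_re_le_norm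
    Complex.abs_im_le_norm
  have hir := hcov Complex.measurable_im Complex.measurable_re Complex.abs_im_le_norm
    Complex.abs_re_le_norm
  refine (Complex.norm_le_abs_re_add_abs_im _).trans ?_
  linarith [abs_sub (cov[fun ω => (f ω).re, fun ω => (g ω).re; P])
      (cov[fun ω => (f ω).im, fun ω => (g ω).im; P]),
    abs_add_le (cov[fun ω => (f ω).re, fun ω => (g ω).im; P])
      (cov[fun ω => (f ω).im, fun ω => (g ω).re; P])]

theorem norm_charFun_map_add_le {E : Type*} [NormedAddCommGroup E] [InnerProductSpace ℝ E]
    [MeasurableSpace E] [BorelSpace E] [SecondCountableTopology E]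
    (hm₁ : m₁ ≤ m₀) (hm₂ : m₂ ≤ m₀) {U V : Ω → E} (hU : Measurable[m₁] U) (hV : Measurable[m₂] V)
    (t : E) :
    ‖charFun (P.map fun ω => U ω + V ω) t‖ ≤ ‖charFun (P.map U) t‖ + 16 * alphaSig P m₁ m₂ := by
  have hUP : Measurable[m₀] U := hU.mono hm₁ le_rfl
  have hVP : Measurable[m₀] V := hV.mono hm₂ le_rfl
  have hexp : Measurable fun x : E => Complex.exp (inner ℝ x t * Complex.I) := by fun_prop
  have hnorm (x : E) : ‖Complex.exp (inner ℝ x t * Complex.I)‖ ≤ 1 :=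
    (Complex.norm_exp_ofReal_mul_I _).le
  have hcharFun {W : Ω → E} (hW : Measurable[m₀] W) :
      charFun (P.map W) t = ∫ ω, Complex.exp (inner ℝ (W ω) t * Complex.I) ∂P :=
    integral_map hW.aemeasurable hexp.aestronglyMeasurable
  have hcov : ‖charFun (P.map fun ω => U ω + V ω) t - charFun (P.map U) t * charFun (P.map V) t‖
      ≤ 16 * alphaSig P m₁ m₂ := by
    rw [hcharFun hUP, hcharFun hVP, hcharFun (W := fun ω => U ω + V ω) (hUP.add hVP)]
    simp only [inner_add_left, Complex.ofReal_add, add_mul, Complex.exp_add]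
    exact norm_integral_mul_sub_integral_mul_integral_le hm₁ hm₂ (hexp.comp hU) (hexp.comp hV)
      (fun _ => hnorm _) fun _ => hnorm _
  have : IsProbabilityMeasure (P.map V) := Measure.isProbabilityMeasure_map hVP.aemeasurable
  calc ‖charFun (P.map fun ω => U ω + V ω) t‖
      ≤ ‖charFun (P.map U) t * charFun (P.map V) t‖ + 16 * alphaSig P m₁ m₂ :=
        (norm_le_norm_add_norm_sub' _ _).trans (add_le_add le_rfl hcov)
    _ ≤ ‖charFun (P.map U) t‖ + 16 * alphaSig P m₁ m₂ := by
        gcongr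
        rw [norm_mul]
        exact mul_le_of_le_one_right (norm_nonneg _) (norm_charFun_le_one t)

end Mixing

section Degenerate

theorem ae_eq_of_map_eq_dirac {α β : Type*} [MeasurableSpace α] [MeasurableSpace β]
    [MeasurableSingletonClass β] {μ : Measure α} {f : α → β} (hf : AEMeasurable f μ) {c : β}
    (h : μ.map f = Measure.dirac c) : ∀ᵐ x ∂μ, f x = c := by
  refine ae_of_ae_map (p := fun y => y = c) hf ?_
  rw [h]
  exact (ae_dirac_iff (measurableSet_singleton c)).2 rfl

-- The symmetrization `μ ∗ μ.map (-·)` has characteristic function `‖charFun μ‖ ^ 2 = 1`, so two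
-- independent copies coincide almost surely.
theorem exists_eq_dirac_of_one_le_norm_charFun {E : Type*} [NormedAddCommGroup E]
    [InnerProductSpace ℝ E] [CompleteSpace E] [SecondCountableTopology E] [MeasurableSpace E]
    [BorelSpace E] {μ : Measure E} [IsProbabilityMeasure μ] (h : ∀ t, 1 ≤ ‖charFun μ t‖) :
    ∃ x, μ = Measure.dirac x := by
  have hneg : Measurable fun x : E => (-1 : ℝ) • x := measurable_const_smul _
  set ν := μ.map fun x => (-1 : ℝ) • x with hν
  have : IsProbabilityMeasure ν := Measure.isProbabilityMeasure_map hneg.aemeasurable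
  have hsymm : μ ∗ ν = Measure.dirac 0 := by
    refine Measure.ext_of_charFun (funext fun t => ?_)
    have hμ : ‖charFun μ t‖ = 1 := (norm_charFun_le_one t).antisymm (h t)
    rw [charFun_conv, hν, charFun_map_smul, neg_one_smul, charFun_neg, Complex.mul_conj,
      Complex.normSq_eq_norm_sq, hμ, charFun_dirac, inner_zero_left]
    norm_num
  have hdiag : ∀ᵐ p ∂μ.prod ν, p.1 + p.2 = 0 := ae_eq_of_map_eq_dirac (by fun_prop) hsymm
  obtain ⟨x, hx⟩ := (Measure.ae_ae_of_ae_prod hdiag).exists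
  have hconst : id =ᵐ[μ] fun _ => x := by
    filter_upwards [ae_of_ae_map hneg.aemeasurable hx] with y hy
    rw [neg_one_smul, add_neg_eq_zero] at hy
    exact hy.symm
  refine ⟨x, ?_⟩
  rw [← Measure.map_id (μ := μ), Measure.map_congr hconst, Measure.map_const, measure_univ,
    one_smul]

theorem IsFull.map_dotProduct_ne_dirac {d : ℕ} {μ : Measure (Fin d → ℝ)} [IsProbabilityMeasure μ]
    (h : IsFull μ) {w : Fin d → ℝ} (hw : w ≠ 0) (c : ℝ) :
    μ.map (fun x => w ⬝ᵥ x) ≠ Measure.dirac c := by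
  intro hc
  have hae : ∀ᵐ x ∂μ, w ⬝ᵥ x = c := ae_eq_of_map_eq_dirac (by fun_prop) hc
  obtain ⟨v, hv⟩ := hae.exists
  refine (h v (LinearMap.ker (dotProductBilin ℝ ℝ w)) fun htop => hw ?_).ne ?_
  · exact dotProduct_self_eq_zero.1 (LinearMap.mem_ker.1 (htop ▸ Submodule.mem_top (x := w)))
  · refine (measure_congr (eventuallyEq_univ.2 ?_)).trans measure_univ
    filter_upwards [hae] with x hx
    exact (dotProduct_sub w x v).trans (sub_eq_zero.2 (hx.trans hv.symm))

end Degenerate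

theorem exists_vecMul_tendsto_of_norm_tendsto_atTop {m n : Type*} [Fintype m] [Fintype n]
    {B : ℕ → Matrix m n ℝ} (hB : Tendsto (fun k => ‖B k‖) atTop atTop) :
    ∃ φ : ℕ → ℕ, StrictMono φ ∧ ∃ (v : ℕ → m → ℝ) (w : n → ℝ), Tendsto v atTop (𝓝 0) ∧ w ≠ 0 ∧
      Tendsto (fun k => v k ᵥ* B (φ k)) atTop (𝓝 w) := by
  classical
  have : ProperSpace (Matrix m n ℝ) := FiniteDimensional.proper ℝ _
  have hnorm : ∀ᶠ k in atTop, ‖‖B k‖⁻¹ • B k‖ = 1 := by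
    filter_upwards [hB.eventually_gt_atTop 0] with k hk
    exact norm_smul_inv_norm (𝕜 := ℝ) (norm_pos_iff.1 hk)
  obtain ⟨B₀, hB₀, φ, hφ, hlim⟩ := (isCompact_sphere (0 : Matrix m n ℝ) 1).tendsto_subseq'
    (hnorm.mono fun k hk => mem_sphere_zero_iff_norm.2 hk).frequently
  obtain ⟨i, hi⟩ : ∃ i, B₀ i ≠ 0 :=
    Function.ne_iff.1 (norm_ne_zero_iff.1 ((mem_sphere_zero_iff_norm.1 hB₀).trans_ne one_ne_zero))
  refine ⟨φ, hφ, fun k => ‖B (φ k)‖⁻¹ • Pi.single i 1, B₀ i, ?_, hi, ?_⟩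
  · have hinv : Tendsto (fun k => ‖B (φ k)‖⁻¹) atTop (𝓝 0) :=
      (hB.comp hφ.tendsto_atTop).inv_tendsto_atTop
    simpa only [zero_smul] using hinv.smul_const (Pi.single i (1 : ℝ))
  · simp only [smul_vecMul, single_one_vecMul]
    exact ((continuous_apply i).tendsto B₀).comp hlim

section Distribution

theorem tendstoInDistribution_comp {ι κ Ω' E : Type*} {Ω : ι → Type*}
    [∀ i, MeasurableSpace (Ω i)] {P : (i : ι) → Measure (Ω i)} [∀ i, IsProbabilityMeasure (P i)]
    [MeasurableSpace Ω'] {P' : Measure Ω'} [IsProbabilityMeasure P'] [TopologicalSpace E]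
    [MeasurableSpace E] [OpensMeasurableSpace E] {Y : (i : ι) → Ω i → E} {Z : Ω' → E}
    {l : Filter ι} {l' : Filter κ} {φ : κ → ι} (h : TendstoInDistribution Y l Z P P')
    (hφ : Tendsto φ l' l) :
    TendstoInDistribution (fun k => Y (φ k)) l' Z (fun k => P (φ k)) P' where
  forall_aemeasurable k := h.forall_aemeasurable (φ k)
  aemeasurable_limit := h.aemeasurable_limit
  tendsto := h.tendsto.comp hφ

theorem tendstoInMeasure_const_fun {ι Ω E : Type*} [MeasurableSpace Ω] (P : Measure Ω)
    [PseudoEMetricSpace E] {v : ι → E} {w : E} {l : Filter ι} (hv : Tendsto v l (𝓝 w)) :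
    TendstoInMeasure P (fun k _ => v k) l (fun _ => w) := by
  intro ε hε
  refine tendsto_nhds_of_eventually_eq ?_
  filter_upwards [EMetric.tendsto_nhds.1 hv ε hε] with k hk
  simp only [not_le.2 hk, Set.ofPred_false, measure_empty]

theorem Infinitesimal.tendstoInMeasure_sum {Ω : Type*} [MeasurableSpace Ω] {P : Measure Ω}
    [IsFiniteMeasure P] {d : ℕ} {A : ℕ → Matrix (Fin d) (Fin d) ℝ} {X : ℕ → Ω → Fin d → ℝ}
    (h : Infinitesimal P A X) {ι : Type*} {l : Filter ι} {n : ι → ℕ} (hn : Tendsto n l atTop)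
    {s : ι → Finset ℕ} (hs : ∀ k, s k ⊆ Finset.Icc 1 (n k)) {q : ℕ}
    (hq : ∀ k, (s k).card ≤ q) :
    TendstoInMeasure P (fun k ω => A (n k) *ᵥ ∑ j ∈ s k, X j ω) l 0 := by
  rw [tendstoInMeasure_iff_measureReal_norm]
  intro ε hε
  have hsum {a : ℝ} (ha : 0 < a) (k : ι) : ∑ _j ∈ s k, a / (q + 1) < a := by
    have hk : ((s k).card : ℝ) < q + 1 := by exact_mod_cast Nat.lt_succ_of_le (hq k)
    rw [Finset.sum_const, nsmul_eq_mul, ← mul_div_assoc, div_lt_iff₀ (by positivity), mul_comm]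
    exact mul_lt_mul_of_pos_left hk ha
  have hsub (k : ι) : {ω | ε ≤ ‖A (n k) *ᵥ ∑ j ∈ s k, X j ω‖} ⊆
      ⋃ j ∈ s k, {ω | ε / (q + 1) ≤ ‖A (n k) *ᵥ X j ω‖} := by
    intro ω hω
    by_contra hsmall
    simp only [Set.mem_iUnion, Set.mem_ofPred_eq, not_exists, not_le] at hsmall
    refine (lt_of_le_of_lt ?_ (hsum hε k)).not_ge hω
    rw [mulVec_sum]
    exact norm_sum_le_of_le _ fun j hj => (hsmall j hj).le
  refine Metric.tendsto_nhds.2 fun δ hδ => ?_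
  obtain ⟨N, hN⟩ := h (ε / (q + 1)) (by positivity) (δ / (q + 1)) (by positivity)
  filter_upwards [hn.eventually_ge_atTop N] with k hk
  rw [dist_zero_right, Real.norm_of_nonneg measureReal_nonneg]
  simp only [Pi.zero_apply, sub_zero]
  calc P.real {ω | ε ≤ ‖A (n k) *ᵥ ∑ j ∈ s k, X j ω‖}
      ≤ ∑ j ∈ s k, P.real {ω | ε / (q + 1) ≤ ‖A (n k) *ᵥ X j ω‖} :=
        (measureReal_mono (hsub k) (measure_ne_top _ _)).trans (measureReal_biUnion_finset_le _ _)
    _ ≤ ∑ j ∈ s k, δ / (q + 1) := by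
        refine Finset.sum_le_sum fun j hj => ?_
        have hj' := Finset.mem_Icc.1 (hs k hj)
        exact (hN (n k) hk j hj'.1 hj'.2).le
    _ < δ := hsum hδ k

variable {Ω Ω' : Type*} [MeasurableSpace Ω] {P : Measure Ω} [IsProbabilityMeasure P]
  [MeasurableSpace Ω'] {P' : Measure Ω'} [IsProbabilityMeasure P']

theorem tendstoInDistribution_dotProduct {ι n : Type*} [Fintype n] {Y : ι → Ω → n → ℝ}
    {Z : Ω' → n → ℝ} {v : ι → n → ℝ} {w : n → ℝ} {l : Filter ι} [l.IsCountablyGenerated]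
    (hv : Tendsto v l (𝓝 w)) (hY : TendstoInDistribution Y l Z (fun _ => P) P') :
    TendstoInDistribution (fun k ω => v k ⬝ᵥ Y k ω) l (fun ω => w ⬝ᵥ Z ω) (fun _ => P) P' :=
  hY.continuous_comp_prodMk_of_tendstoInMeasure_const
    (g := fun p : (n → ℝ) × (n → ℝ) => p.2 ⬝ᵥ p.1) (by fun_prop)
    (tendstoInMeasure_const_fun P hv) (fun _ => aemeasurable_const)

theorem tendsto_charFun_map {Y : ℕ → Ω → ℝ} {Z : Ω' → ℝ}
    (h : TendstoInDistribution Y atTop Z (fun _ => P) P') (t : ℝ) :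
    Tendsto (fun k => charFun (P.map (Y k)) t) atTop (𝓝 (charFun (P'.map Z) t)) :=
  ProbabilityMeasure.tendsto_iff_tendsto_charFun.1 h.tendsto t

theorem one_le_norm_charFun_add {m₁ m₂ : ℕ → MeasurableSpace Ω} {U V : ℕ → Ω → ℝ} {Z : Ω' → ℝ}
    {c : ℝ} (hm₁ : ∀ k, m₁ k ≤ ‹MeasurableSpace Ω›) (hm₂ : ∀ k, m₂ k ≤ ‹MeasurableSpace Ω›)
    (hU : ∀ k, Measurable[m₁ k] (U k)) (hV : ∀ k, Measurable[m₂ k] (V k))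
    (hc : ∀ k, alphaSig P (m₁ k) (m₂ k) ≤ c)
    (hUZ : TendstoInDistribution U atTop Z (fun _ => P) P')
    (hUV : TendstoInDistribution (fun k ω => U k ω + V k ω) atTop (fun _ => (0 : ℝ))
      (fun _ => P) P') (t : ℝ) :
    1 ≤ ‖charFun (P'.map Z) t‖ + 16 * c := by
  have hzero : ‖charFun (P'.map fun _ => (0 : ℝ)) t‖ = 1 := by simp [Measure.map_const]
  rw [← hzero]
  refine le_of_tendsto_of_tendsto' (tendsto_charFun_map hUV t).norm
    ((tendsto_charFun_map hUZ t).norm.add_const _) fun k => ?_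
  calc ‖charFun (P.map fun ω => U k ω + V k ω) t‖
      ≤ ‖charFun (P.map (U k)) t‖ + 16 * alphaSig P (m₁ k) (m₂ k) :=
        norm_charFun_map_add_le (hm₁ k) (hm₂ k) (hU k) (hV k) t
    _ ≤ ‖charFun (P.map (U k)) t‖ + 16 * c := by linarith [hc k]

theorem WeakLim.tendstoInDistribution {d : ℕ} {μ : Measure (Fin d → ℝ)} [IsProbabilityMeasure μ]
    {Y : ℕ → Ω → Fin d → ℝ} (hY : ∀ n, Measurable (Y n))
    (h : WeakLim (fun n => P.map (Y n)) μ) :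
    TendstoInDistribution Y atTop id (fun _ => P) μ where
  forall_aemeasurable n := (hY n).aemeasurable
  tendsto := by
    refine ProbabilityMeasure.tendsto_iff_forall_integral_tendsto.2 fun f => ?_
    simpa only [ProbabilityMeasure.coe_mk, Measure.map_id] using h f

end Distribution

section MixingArray

variable {Ω : Type*} {d : ℕ} {X : ℕ → Ω → Fin d → ℝ}

theorem measurable_iSup_comap_sum (K : Set ℕ) {s : Finset ℕ} (hs : ∀ j ∈ s, j ∈ K) :
    Measurable[⨆ k ∈ K, MeasurableSpace.comap (X k) inferInstance] fun ω => ∑ j ∈ s, X j ω :=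
  Finset.measurable_fun_sum s fun j hj =>
    (comap_measurable (X j)).mono (le_iSup₂_of_le j (hs j hj) le_rfl) le_rfl

theorem dotProduct_mulVec_partialSum_sub_sum_Ioc (A : ℕ → Matrix (Fin d) (Fin d) ℝ)
    (b : ℕ → Fin d → ℝ) {m r n : ℕ} (hmr : m ≤ r) (hrn : r ≤ n) {v w : Fin d → ℝ}
    (hvw : v ᵥ* A n = w ᵥ* A m) (ω : Ω) :
    v ⬝ᵥ (A n *ᵥ partialSum X n ω + b n - A n *ᵥ ∑ j ∈ Finset.Ioc m r, X j ω) =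
      w ⬝ᵥ (A m *ᵥ partialSum X m ω + b m) +
        (v ⬝ᵥ (A n *ᵥ ∑ j ∈ Finset.Ioc r n, X j ω + b n) - w ⬝ᵥ b m) := by
  have hsplit : partialSum X n ω =
      partialSum X m ω + ∑ j ∈ Finset.Ioc m r, X j ω + ∑ j ∈ Finset.Ioc r n, X j ω := by
    have hIoc (n : ℕ) : partialSum X n ω = ∑ j ∈ Finset.Ioc 0 n, X j ω := by
      rw [← Finset.Icc_add_one_left_eq_Ioc]
      rfl
    rw [hIoc, hIoc, Finset.sum_Ioc_consecutive _ m.zero_le hmr,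
      Finset.sum_Ioc_consecutive _ r.zero_le hrn]
  have hhead : v ⬝ᵥ A n *ᵥ partialSum X m ω = w ⬝ᵥ A m *ᵥ partialSum X m ω := by
    rw [dotProduct_mulVec, hvw, dotProduct_mulVec]
  rw [hsplit]
  simp only [mulVec_add, dotProduct_add, dotProduct_sub, hhead]
  ring

variable [MeasurableSpace Ω]

theorem iSup_comap_le (hX : ∀ j, Measurable (X j)) (K : Set ℕ) :
    ⨆ k ∈ K, MeasurableSpace.comap (X k) inferInstance ≤ ‹MeasurableSpace Ω› :=
  iSup₂_le fun k _ => (hX k).comap_le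

variable {P : Measure Ω} [IsProbabilityMeasure P] {A : ℕ → Matrix (Fin d) (Fin d) ℝ}
  {b : ℕ → Fin d → ℝ} {μ : Measure (Fin d → ℝ)} [IsProbabilityMeasure μ] {m n : ℕ → ℕ}
  {v w : ℕ → Fin d → ℝ} {w₀ : Fin d → ℝ}

theorem one_le_norm_charFun_map_dotProduct_add_alphaMix (hX : ∀ j, Measurable (X j))
    (hinf : Infinitesimal P A X)
    (hconv : WeakLim (fun n => P.map fun ω => A n *ᵥ partialSum X n ω + b n) μ)
    (hm : Tendsto m atTop atTop) (hm₁ : ∀ k, 1 ≤ m k) (hmn : ∀ k, m k ≤ n k)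
    (hv : Tendsto v atTop (𝓝 0)) (hw : Tendsto w atTop (𝓝 w₀))
    (hvw : ∀ k, v k ᵥ* A (n k) = w k ᵥ* A (m k)) (q : ℕ) (t : ℝ) :
    1 ≤ ‖charFun (μ.map fun x => w₀ ⬝ᵥ x) t‖ + 16 * alphaMix P X (q + 1) := by
  have hn : Tendsto n atTop atTop := tendsto_atTop_mono hmn hm
  have hT := WeakLim.tendstoInDistribution (fun n => by unfold partialSum; fun_prop) hconv
  let r k := min (n k) (m k + q)
  have hgap : TendstoInMeasure P
      (fun k ω => A (n k) *ᵥ ∑ j ∈ Finset.Ioc (m k) (r k), X j ω) atTop 0 := by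
    refine hinf.tendstoInMeasure_sum hn (q := q) (fun k j hj => ?_) fun k => ?_
    · have hj' := Finset.mem_Ioc.1 hj
      exact Finset.mem_Icc.2 ⟨by lia, hj'.2.trans (min_le_left _ _)⟩
    · rw [Nat.card_Ioc]
      lia
  have hrest := tendstoInDistribution_dotProduct hv
    ((tendstoInDistribution_comp hT hn).continuous_comp_prodMk_of_tendstoInMeasure_const
      (g := fun p : (Fin d → ℝ) × (Fin d → ℝ) => p.1 - p.2) (by fun_prop) hgap
      fun k => by fun_prop)
  refine one_le_norm_charFun_add (fun k => iSup_comap_le hX _) (fun k => iSup_comap_le hX _)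
    (U := fun k ω => w k ⬝ᵥ (A (m k) *ᵥ partialSum X (m k) ω + b (m k)))
    (V := fun k ω => v k ⬝ᵥ (A (n k) *ᵥ ∑ j ∈ Finset.Ioc (r k) (n k), X j ω + b (n k)) -
      w k ⬝ᵥ b (m k)) (fun k => ?_) (fun k => ?_)
    (fun k => alphaSig_le_alphaMix X (hm₁ k) (q + 1))
    (tendstoInDistribution_dotProduct hw (tendstoInDistribution_comp hT hm)) ?_ t
  · have hhead : Measurable fun x => w k ⬝ᵥ (A (m k) *ᵥ x + b (m k)) := by fun_prop
    exact hhead.comp (measurable_iSup_comap_sum _ fun j hj => Finset.mem_Icc.1 hj)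
  · have htail : Measurable fun x => v k ⬝ᵥ (A (n k) *ᵥ x + b (n k)) - w k ⬝ᵥ b (m k) := by
      fun_prop
    refine htail.comp (measurable_iSup_comap_sum _ fun j hj => Set.mem_Ici.2 ?_)
    have hj' := Finset.mem_Ioc.1 hj
    lia
  · exact hrest.congr (fun k => ae_of_all _ <|
      dotProduct_mulVec_partialSum_sub_sum_Ioc A b (le_min (hmn k) le_self_add) (min_le_left _ _)
        (hvw k)) (ae_of_all _ fun _ => zero_dotProduct _)

theorem one_le_norm_charFun_map_dotProduct (hX : ∀ j, Measurable (X j))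
    (hmix : StronglyMixing P X) (hinf : Infinitesimal P A X)
    (hconv : WeakLim (fun n => P.map fun ω => A n *ᵥ partialSum X n ω + b n) μ)
    (hm : Tendsto m atTop atTop) (hm₁ : ∀ k, 1 ≤ m k) (hmn : ∀ k, m k ≤ n k)
    (hv : Tendsto v atTop (𝓝 0)) (hw : Tendsto w atTop (𝓝 w₀))
    (hvw : ∀ k, v k ᵥ* A (n k) = w k ᵥ* A (m k)) (t : ℝ) :
    1 ≤ ‖charFun (μ.map fun x => w₀ ⬝ᵥ x) t‖ := by
  have hα : Tendsto (fun q => ‖charFun (μ.map fun x => w₀ ⬝ᵥ x) t‖ + 16 * alphaMix P X (q + 1))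
      atTop (𝓝 (‖charFun (μ.map fun x => w₀ ⬝ᵥ x) t‖ + 16 * 0)) :=
    (((tendsto_add_atTop_iff_nat 1).2 hmix).const_mul 16).const_add _
  rw [mul_zero, add_zero] at hα
  exact ge_of_tendsto' hα fun q =>
    one_le_norm_charFun_map_dotProduct_add_alphaMix hX hinf hconv hm hm₁ hmn hv hw hvw q t

end MixingArray

section Bounded

variable {d : ℕ} {A : ℕ → Matrix (Fin d) (Fin d) ℝ}

theorem exists_forall_ge_norm_mul_inv_le {Ω : Type*} [MeasurableSpace Ω] {P : Measure Ω}
    [IsProbabilityMeasure P] {X : ℕ → Ω → Fin d → ℝ} (hX : ∀ j, Measurable (X j))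
    (hA : ∀ n, IsUnit (A n)) {b : ℕ → Fin d → ℝ} {μ : Measure (Fin d → ℝ)} [IsProbabilityMeasure μ]
    (hfull : IsFull μ) (hmix : StronglyMixing P X) (hinf : Infinitesimal P A X)
    (hconv : WeakLim (fun n => P.map fun ω => A n *ᵥ partialSum X n ω + b n) μ) :
    ∃ M : ℕ, ∀ n m, M ≤ m → m ≤ n → ‖A n * (A m)⁻¹‖ ≤ M := by
  by_contra! hunbounded
  choose n m hm hmn hlarge using fun k => hunbounded (k + 1)
  obtain ⟨φ, hφ, v, w, hv, hw₀, hw⟩ := exists_vecMul_tendsto_of_norm_tendsto_atTop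
    (tendsto_atTop_mono (fun k => (hlarge k).le)
      (tendsto_natCast_atTop_atTop.comp (tendsto_add_atTop_nat 1)))
  have hm_lim : Tendsto m atTop atTop := tendsto_atTop_mono hm (tendsto_add_atTop_nat 1)
  have hvw (k : ℕ) : v k ᵥ* A (n (φ k)) =
      (v k ᵥ* (A (n (φ k)) * (A (m (φ k)))⁻¹)) ᵥ* A (m (φ k)) := by
    rw [vecMul_vecMul, Matrix.mul_assoc,
      nonsing_inv_mul _ ((isUnit_iff_isUnit_det _).1 (hA _)), Matrix.mul_one]
  have : IsProbabilityMeasure (μ.map fun x => w ⬝ᵥ x) :=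
    Measure.isProbabilityMeasure_map (by fun_prop)
  obtain ⟨c, hc⟩ := exists_eq_dirac_of_one_le_norm_charFun fun t =>
    one_le_norm_charFun_map_dotProduct hX hmix hinf hconv (hm_lim.comp hφ.tendsto_atTop)
      (fun k => le_of_add_le_right (hm (φ k))) (fun k => hmn (φ k)) hv hw hvw t
  exact hfull.map_dotProduct_ne_dirac hw₀ c hc

theorem norm_mul_le_card_mul {l m n : Type*} [Fintype l] [Fintype m] [Fintype n]
    (B : Matrix l m ℝ) (D : Matrix m n ℝ) : ‖B * D‖ ≤ Fintype.card m * ‖B‖ * ‖D‖ := by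
  refine (norm_le_iff (by positivity)).2 fun i j => ?_
  calc ‖(B * D) i j‖ ≤ ∑ k, ‖B i k‖ * ‖D k j‖ :=
        (norm_sum_le _ _).trans_eq (Finset.sum_congr rfl fun k _ => norm_mul _ _)
    _ ≤ ∑ _k : m, ‖B‖ * ‖D‖ := by
        gcongr <;> exact norm_entry_le_entrywise_sup_norm _
    _ = Fintype.card m * ‖B‖ * ‖D‖ := by
        rw [Finset.sum_const, Finset.card_univ, nsmul_eq_mul, mul_assoc]

theorem exists_forall_norm_mul_inv_le (hA : ∀ n, IsUnit (A n)) {M : ℕ} {C : ℝ}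
    (h : ∀ n m, M ≤ m → m ≤ n → ‖A n * (A m)⁻¹‖ ≤ C) :
    ∃ C' : ℝ, ∀ n m, m ≤ n → ‖A n * (A m)⁻¹‖ ≤ C' := by
  have hfactor (n m : ℕ) : A n * (A m)⁻¹ = A n * (A M)⁻¹ * (A M * (A m)⁻¹) := by
    have hdet : IsUnit (A M).det := (isUnit_iff_isUnit_det _).1 (hA M)
    rw [Matrix.mul_assoc, ← Matrix.mul_assoc (A M)⁻¹, nonsing_inv_mul _ hdet, Matrix.one_mul]
  have hbdd (m : ℕ) : BddAbove (Set.range fun n => ‖A n * (A m)⁻¹‖) := by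
    refine Filter.IsBoundedUnder.bddAbove_range
      ⟨Fintype.card (Fin d) * C * ‖A M * (A m)⁻¹‖, eventually_map.2 ?_⟩
    filter_upwards [eventually_ge_atTop M] with n hn
    rw [hfactor]
    refine (norm_mul_le_card_mul _ _).trans ?_
    gcongr
    exact h n M le_rfl hn
  choose K hK using hbdd
  obtain ⟨K', hK'⟩ := ((Finset.range M).image K).exists_le
  refine ⟨max C K', fun n m hmn => ?_⟩
  rcases le_or_gt M m with hMm | hmM
  · exact (h n m hMm hmn).trans (le_max_left _ _)
  · calc ‖A n * (A m)⁻¹‖ ≤ K m := hK m ⟨n, rfl⟩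
      _ ≤ K' := hK' _ (Finset.mem_image_of_mem K (Finset.mem_range.2 hmM))
      _ ≤ max C K' := le_max_right _ _

end Bounded

/-- **Proposition 2 (first part).** Under strong mixing, infinitesimality and weak
convergence to a full law, with all `A_n` invertible,
`sup { ‖A_n A_m⁻¹‖ : n ∈ ℕ, 1 ≤ m ≤ n } < ∞`. -/
theorem sup_norm_ratio_lt_top
    {d : ℕ} {Ω : Type*} [MeasurableSpace Ω] (P : Measure Ω) [IsProbabilityMeasure P]
    (X : ℕ → Ω → (Fin d → ℝ)) (hXmeas : ∀ j, Measurable (X j))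
    (A : ℕ → Matrix (Fin d) (Fin d) ℝ) (hAinv : ∀ n, IsUnit (A n)) (b : ℕ → Fin d → ℝ)
    (μ : Measure (Fin d → ℝ)) [IsProbabilityMeasure μ] (hfull : IsFull μ)
    (hmix : StronglyMixing P X)
    (hinf : Infinitesimal P A X)
    (hconv : WeakLim (fun n => P.map (fun ω => (A n).mulVec (partialSum X n ω) + b n)) μ) :
    ∃ C : ℝ, ∀ n m : ℕ, 1 ≤ m → m ≤ n → ‖A n * (A m)⁻¹‖ ≤ C := by
  obtain ⟨M, hM⟩ := exists_forall_ge_norm_mul_inv_le hXmeas hAinv hfull hmix hinf hconv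
  obtain ⟨C, hC⟩ := exists_forall_norm_mul_inv_le hAinv hM
  exact ⟨C, fun n m _ hmn => hC n m hmn⟩
end
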